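/- arXiv:2209.04236 — 5 statements merged into one kernel-verified Lean document; each statement's English description precedes it below -/
import Mathlib

section
/- Let d ≥ 2. There is a constant C > 0 depending only on d such that the following holds. Let ξ ∈ ℝ^d_+, set s = |ξ|₁ = ξ₁ + ⋯ + ξ_d, let M > 0, and define c ∈ ℝ^d by cᵢ = ξᵢ for i = 1,…,d−1 and c_d = ξ_d + M. Then the closed diamond D = {x ∈ ℝ^d_+ : |x − c|₁ ≤ M} satisfies μ(D) ≤ C · (1 + s − ξ_d)^{d−1} · e^{−s}. (Note s − ξ_d = ξ₁ + ⋯ + ξ_{d−1} ≥ 0, every x ∈ D has x_d ≥ ξ_d and |x|₁ ≥ s, and both ξ and (0,…,0,N) with N = c_d − M + M would lie in D.) -/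
open MeasureTheory ENNReal

/-- The exponential measure `dμ(x) = exp(-|x₁|-⋯-|x_d|) dx` on `ℝ^d`; the diamond considered
below is contained in `ℝ^d_+`, so this also computes the restricted measure. -/
noncomputable def expMeasure (d : ℕ) : Measure (Fin d → ℝ) :=
  volume.withDensity (fun x => ENNReal.ofReal (Real.exp (-∑ i, |x i|)))

/-!
On the positive orthant the measure is the law of independent rate-one exponential variables `Xᵢ`.
Every point of the diamond with centre `ξ + M e_k` and radius `M` satisfies
`x_k ≥ ξ_k + ∑_{i ≠ k} |xᵢ - ξᵢ|`, so the diamond lies in a cone with apex `ξ` that does not depend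
on `M`. Integrating out `X_k` turns the measure of the cone into
`e^{-ξ_k} ∏_{i ≠ k} E[e^{-|Xᵢ - ξᵢ|}]`, whose factors equal `(ξᵢ + 1/2) e^{-ξᵢ}`.
-/

section ProductMeasures

variable {ι : Type*} [Fintype ι]

theorem lintegral_fin_prod_eq_prod {n : ℕ} {E : Fin n → Type*} {mE : ∀ i, MeasurableSpace (E i)}
    (μ : ∀ i, Measure (E i)) [∀ i, SigmaFinite (μ i)] {f : ∀ i, E i → ℝ≥0∞}
    (hf : ∀ i, Measurable (f i)) :
    ∫⁻ x, ∏ i, f i (x i) ∂Measure.pi μ = ∏ i, ∫⁻ t, f i t ∂μ i := by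
  induction n with
  | zero => simp
  | succ n ih =>
    have tail_measurable : Measurable fun y : ∀ j : Fin n, E j.succ ↦ ∏ j, f j.succ (y j) := by
      fun_prop
    rw [← (measurePreserving_piFinSuccAbove μ 0).symm.lintegral_comp (by fun_prop),
      Fin.prod_univ_succ, ← ih (fun j ↦ μ j.succ) (fun j ↦ hf j.succ),
      ← lintegral_prod_mul (hf 0).aemeasurable tail_measurable.aemeasurable]
    exact lintegral_congr fun p ↦ Fin.prod_univ_succ _

theorem lintegral_fintype_prod_eq_prod {E : ι → Type*} {mE : ∀ i, MeasurableSpace (E i)}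
    (μ : ∀ i, Measure (E i)) [∀ i, SigmaFinite (μ i)] {f : ∀ i, E i → ℝ≥0∞}
    (hf : ∀ i, Measurable (f i)) :
    ∫⁻ x, ∏ i, f i (x i) ∂Measure.pi μ = ∏ i, ∫⁻ t, f i t ∂μ i := by
  let e := (Fintype.equivFin ι).symm
  rw [← (measurePreserving_piCongrLeft μ e).lintegral_comp (by fun_prop)]
  simp_rw [← e.prod_comp, MeasurableEquiv.coe_piCongrLeft, Equiv.piCongrLeft_apply_apply]
  exact lintegral_fin_prod_eq_prod (fun i ↦ μ (e i)) fun i ↦ hf (e i)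

theorem pi_withDensity {E : ι → Type*} {mE : ∀ i, MeasurableSpace (E i)}
    (μ : ∀ i, Measure (E i)) [∀ i, SigmaFinite (μ i)] {f : ∀ i, E i → ℝ≥0∞}
    (hf : ∀ i, Measurable (f i)) [∀ i, SigmaFinite ((μ i).withDensity (f i))] :
    Measure.pi (fun i ↦ (μ i).withDensity (f i)) =
      (Measure.pi μ).withDensity fun x ↦ ∏ i, f i (x i) := by
  refine Measure.pi_eq fun s hs ↦ ?_
  rw [withDensity_apply _ (.univ_pi hs), Measure.restrict_pi_pi,
    lintegral_fintype_prod_eq_prod _ hf]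
  exact Finset.prod_congr rfl fun i _ ↦ (withDensity_apply _ (hs i)).symm

theorem pi_setOf_removeNth_le_apply {n : ℕ} (μ : Fin (n + 1) → Measure ℝ) [∀ i, SigmaFinite (μ i)]
    (k : Fin (n + 1)) {g : (Fin n → ℝ) → ℝ} (hg : Measurable g) :
    Measure.pi μ {x | g (k.removeNth x) ≤ x k} =
      ∫⁻ y, μ k (Set.Ici (g y)) ∂Measure.pi fun j ↦ μ (k.succAbove j) := by
  have epigraph_measurable : MeasurableSet {p : ℝ × (Fin n → ℝ) | g p.2 ≤ p.1} :=
    measurableSet_le (by fun_prop) (by fun_prop)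
  exact ((measurePreserving_piFinSuccAbove μ k).measure_preimage_equiv _).trans
    (Measure.prod_apply_symm epigraph_measurable)

end ProductMeasures

section ExponentialDistribution

theorem lintegral_exp_mul_Ioi {a : ℝ} (ha : a < 0) (c : ℝ) :
    ∫⁻ x in Set.Ioi c, ENNReal.ofReal (Real.exp (a * x)) =
      ENNReal.ofReal (-Real.exp (a * c) / a) := by
  rw [← integral_exp_mul_Ioi ha, ofReal_integral_eq_lintegral_ofReal (integrableOn_exp_mul_Ioi ha c)
    (.of_forall fun x ↦ (Real.exp_pos _).le)]

theorem expDistribution_eq_restrict_withDensity (r : ℝ) :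
    ProbabilityTheory.expMeasure r = (volume.restrict (Set.Ici 0)).withDensity
      fun x ↦ ENNReal.ofReal (r * Real.exp (-(r * x))) := by
  rw [← withDensity_indicator measurableSet_Ici]
  change volume.withDensity (ProbabilityTheory.exponentialPDF r) = _
  congr 1 with x
  by_cases hx : 0 ≤ x <;> simp [ProbabilityTheory.exponentialPDF_eq, hx]

theorem expDistribution_Ici {r t : ℝ} (hr : 0 < r) (ht : 0 ≤ t) :
    ProbabilityTheory.expMeasure r (Set.Ici t) = ENNReal.ofReal (Real.exp (-(r * t))) := by
  rw [expDistribution_eq_restrict_withDensity, withDensity_apply _ measurableSet_Ici,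
    Measure.restrict_restrict measurableSet_Ici,
    Set.inter_eq_left.2 (Set.Ici_subset_Ici.2 ht), setLIntegral_congr Ioi_ae_eq_Ici.symm]
  simp_rw [ENNReal.ofReal_mul hr.le, ← neg_mul]
  rw [lintegral_const_mul _ (by fun_prop), lintegral_exp_mul_Ioi (neg_neg_of_pos hr),
    ← ENNReal.ofReal_mul hr.le]
  congr 1
  field_simp

theorem setLIntegral_Icc_exp_neg_sub_abs_sub (a : ℝ) :
    ∫⁻ x in Set.Icc 0 a, ENNReal.ofReal (Real.exp (-x - |x - a|)) =
      ENNReal.ofReal (Real.exp (-a) * a) := by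
  have integrand_eq : ∀ x ∈ Set.Icc 0 a, ENNReal.ofReal (Real.exp (-x - |x - a|)) =
      ENNReal.ofReal (Real.exp (-a)) := fun x hx ↦ by
    rw [abs_of_nonpos (by linarith [hx.2])]
    ring_nf
  rw [setLIntegral_congr_fun measurableSet_Icc integrand_eq, setLIntegral_const,
    Real.volume_Icc, sub_zero, ENNReal.ofReal_mul (Real.exp_pos _).le]

theorem setLIntegral_Ioi_exp_neg_sub_abs_sub (a : ℝ) :
    ∫⁻ x in Set.Ioi a, ENNReal.ofReal (Real.exp (-x - |x - a|)) =
      ENNReal.ofReal (Real.exp (-a) * (1 / 2)) := by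
  have integrand_eq : ∀ x ∈ Set.Ioi a, ENNReal.ofReal (Real.exp (-x - |x - a|)) =
      ENNReal.ofReal (Real.exp a) * ENNReal.ofReal (Real.exp (-2 * x)) := fun x hx ↦ by
    rw [abs_of_pos (sub_pos.2 hx), ← ENNReal.ofReal_mul (Real.exp_pos _).le, ← Real.exp_add]
    ring_nf
  have exp_split : Real.exp (-a) = Real.exp a * Real.exp (-2 * a) := by
    rw [← Real.exp_add]
    ring_nf
  rw [setLIntegral_congr_fun measurableSet_Ioi integrand_eq, lintegral_const_mul _ (by fun_prop),
    lintegral_exp_mul_Ioi (by norm_num), ← ENNReal.ofReal_mul (Real.exp_pos _).le, exp_split]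
  ring_nf

theorem lintegral_exp_neg_abs_sub_expDistribution {a : ℝ} (ha : 0 ≤ a) :
    ∫⁻ x, ENNReal.ofReal (Real.exp (-|x - a|)) ∂ProbabilityTheory.expMeasure 1 =
      ENNReal.ofReal (Real.exp (-a) * (a + 1 / 2)) :=
  calc ∫⁻ x, ENNReal.ofReal (Real.exp (-|x - a|)) ∂ProbabilityTheory.expMeasure 1
    _ = ∫⁻ x in Set.Ici 0, ENNReal.ofReal (Real.exp (-x - |x - a|)) := by
        rw [expDistribution_eq_restrict_withDensity,
          lintegral_withDensity_eq_lintegral_mul _ (by fun_prop) (by fun_prop)]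
        refine lintegral_congr fun x ↦ ?_
        rw [Pi.mul_apply, one_mul, one_mul, ← ENNReal.ofReal_mul (Real.exp_pos _).le,
          ← Real.exp_add, ← sub_eq_add_neg]
    _ = ENNReal.ofReal (Real.exp (-a) * a) + ENNReal.ofReal (Real.exp (-a) * (1 / 2)) := by
        rw [← Set.Icc_union_Ioi_eq_Ici ha, lintegral_union measurableSet_Ioi
          (Set.disjoint_left.2 fun x hx hx_gt ↦ hx.2.not_gt hx_gt),
          setLIntegral_Icc_exp_neg_sub_abs_sub, setLIntegral_Ioi_exp_neg_sub_abs_sub]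
    _ = ENNReal.ofReal (Real.exp (-a) * (a + 1 / 2)) := by
        rw [← ENNReal.ofReal_add (by positivity) (by positivity), mul_add]

theorem expMeasure_restrict_pi_Ioi (d : ℕ) :
    (expMeasure d).restrict (Set.univ.pi fun _ ↦ Set.Ioi 0) =
      Measure.pi fun _ ↦ ProbabilityTheory.expMeasure 1 := by
  have marginal : ProbabilityTheory.expMeasure 1 = (volume.restrict (Set.Ioi 0)).withDensity
      fun x ↦ ENNReal.ofReal (Real.exp (-|x|)) := by
    rw [expDistribution_eq_restrict_withDensity, Measure.restrict_congr_set Ioi_ae_eq_Ici.symm]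
    refine withDensity_congr_ae ?_
    filter_upwards [ae_restrict_mem measurableSet_Ioi] with x hx
    rw [one_mul, one_mul, abs_of_pos hx]
  have := ProbabilityTheory.isProbabilityMeasure_expMeasure one_pos
  have : SigmaFinite ((volume.restrict (Set.Ioi 0)).withDensity
      fun x : ℝ ↦ ENNReal.ofReal (Real.exp (-|x|))) := marginal ▸ inferInstance
  rw [expMeasure, restrict_withDensity (.univ_pi fun _ ↦ measurableSet_Ioi), volume_pi,
    Measure.restrict_pi_pi, marginal, pi_withDensity _ fun _ ↦ by fun_prop]
  congr 1 with x
  rw [← Finset.sum_neg_distrib, Real.exp_sum,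
    ENNReal.ofReal_prod_of_nonneg fun _ _ ↦ (Real.exp_pos _).le]

end ExponentialDistribution

section Diamond

variable {n : ℕ}

/-- The union over `M > 0` of the `ℓ¹` diamonds with centre `ξ + M e_k` and radius `M`, that is, the
epigraph of the `ℓ¹` distance to `ξ` in the coordinates other than `k`, raised to height `ξ k`. -/
def diamondCone (k : Fin (n + 1)) (ξ : Fin (n + 1) → ℝ) : Set (Fin (n + 1) → ℝ) :=
  {x | ξ k + ∑ j, |k.removeNth x j - k.removeNth ξ j| ≤ x k}

theorem diamond_subset_diamondCone (k : Fin (n + 1)) (ξ : Fin (n + 1) → ℝ) (M : ℝ) :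
    {x | ∑ i, |x i - (if i = k then ξ i + M else ξ i)| ≤ M} ⊆ diamondCone k ξ := by
  intro x hx
  simp only [Set.mem_ofPred_eq, Fin.sum_univ_succAbove _ k, Fin.succAbove_ne, if_true,
    if_false] at hx
  have := neg_abs_le (x k - (ξ k + M))
  simp only [diamondCone, Set.mem_ofPred_eq, Fin.removeNth_apply]
  linarith

theorem pi_expDistribution_diamondCone (k : Fin (n + 1)) {ξ : Fin (n + 1) → ℝ}
    (hξ : ∀ i, 0 ≤ ξ i) :
    Measure.pi (fun _ ↦ ProbabilityTheory.expMeasure 1) (diamondCone k ξ) =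
      ENNReal.ofReal (Real.exp (-∑ i, ξ i) * ∏ j, (k.removeNth ξ j + 1 / 2)) := by
  have := ProbabilityTheory.isProbabilityMeasure_expMeasure one_pos
  have tail (y : Fin n → ℝ) :
      ProbabilityTheory.expMeasure 1 (Set.Ici (ξ k + ∑ j, |y j - k.removeNth ξ j|)) =
        ENNReal.ofReal (Real.exp (-ξ k)) *
          ∏ j, ENNReal.ofReal (Real.exp (-|y j - k.removeNth ξ j|)) := by
    rw [expDistribution_Ici one_pos (add_nonneg (hξ k) (by positivity)), one_mul, neg_add,
      Real.exp_add, ← Finset.sum_neg_distrib, Real.exp_sum, ENNReal.ofReal_mul (Real.exp_pos _).le,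
      ENNReal.ofReal_prod_of_nonneg fun j _ ↦ (Real.exp_pos _).le]
  have factors_nonneg (j : Fin n) :
      0 ≤ Real.exp (-k.removeNth ξ j) * (k.removeNth ξ j + 1 / 2) :=
    mul_nonneg (Real.exp_pos _).le (add_nonneg (hξ _) (by norm_num))
  calc Measure.pi (fun _ ↦ ProbabilityTheory.expMeasure 1) (diamondCone k ξ)
    _ = ENNReal.ofReal (Real.exp (-ξ k)) *
          ∏ j, ENNReal.ofReal (Real.exp (-k.removeNth ξ j) * (k.removeNth ξ j + 1 / 2)) := by
        rw [diamondCone, pi_setOf_removeNth_le_apply _ k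
          (g := fun y ↦ ξ k + ∑ j, |y j - k.removeNth ξ j|) (by fun_prop)]
        simp_rw [tail]
        rw [lintegral_const_mul _ (by fun_prop), lintegral_fintype_prod_eq_prod _
          (f := fun j t ↦ ENNReal.ofReal (Real.exp (-|t - k.removeNth ξ j|))) (by fun_prop)]
        exact congrArg _ <| Finset.prod_congr rfl fun j _ ↦
          lintegral_exp_neg_abs_sub_expDistribution (hξ (k.succAbove j))
    _ = ENNReal.ofReal (Real.exp (-∑ i, ξ i) * ∏ j, (k.removeNth ξ j + 1 / 2)) := by
        rw [← ENNReal.ofReal_prod_of_nonneg fun j _ ↦ factors_nonneg j,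
          ← ENNReal.ofReal_mul (Real.exp_pos _).le, Finset.prod_mul_distrib, ← Real.exp_sum,
          ← mul_assoc, ← Real.exp_add, Finset.sum_neg_distrib, ← neg_add,
          Fin.sum_univ_succAbove ξ k]
        rfl

theorem prod_add_half_le_one_add_sum_pow {ι : Type*} [Fintype ι] {a : ι → ℝ} (ha : ∀ i, 0 ≤ a i) :
    ∏ i, (a i + 1 / 2) ≤ (1 + ∑ i, a i) ^ Fintype.card ι := by
  rw [← Finset.card_univ, ← Finset.prod_const]
  refine Finset.prod_le_prod (fun i _ ↦ add_nonneg (ha i) (by norm_num)) fun i _ ↦ ?_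
  have := Finset.single_le_sum (fun i _ ↦ ha i) (Finset.mem_univ i)
  linarith

theorem diamond_touching_axis_measure_bound_general (k : Fin (n + 1)) {ξ : Fin (n + 1) → ℝ}
    (hξ : ∀ i, 0 ≤ ξ i) (M : ℝ) :
    expMeasure (n + 1) {x | (∀ i, 0 < x i) ∧
        ∑ i, |x i - (if i = k then ξ i + M else ξ i)| ≤ M} ≤
      ENNReal.ofReal ((1 + (∑ i, ξ i - ξ k)) ^ n * Real.exp (-∑ i, ξ i)) := by
  have sum_removeNth : ∑ j, k.removeNth ξ j = ∑ i, ξ i - ξ k := by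
    rw [Fin.sum_univ_succAbove ξ k, add_sub_cancel_left]
    rfl
  calc expMeasure (n + 1) {x | (∀ i, 0 < x i) ∧
          ∑ i, |x i - (if i = k then ξ i + M else ξ i)| ≤ M}
    _ ≤ expMeasure (n + 1) (diamondCone k ξ ∩ Set.univ.pi fun _ ↦ Set.Ioi 0) :=
        measure_mono fun x hx ↦ ⟨diamond_subset_diamondCone k ξ M hx.2, fun i _ ↦ hx.1 i⟩
    _ = Measure.pi (fun _ ↦ ProbabilityTheory.expMeasure 1) (diamondCone k ξ) := by
        rw [← expMeasure_restrict_pi_Ioi,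
          Measure.restrict_apply' (.univ_pi fun _ ↦ measurableSet_Ioi)]
    _ = ENNReal.ofReal (Real.exp (-∑ i, ξ i) * ∏ j, (k.removeNth ξ j + 1 / 2)) :=
        pi_expDistribution_diamondCone k hξ
    _ ≤ ENNReal.ofReal ((1 + (∑ i, ξ i - ξ k)) ^ n * Real.exp (-∑ i, ξ i)) := by
        rw [mul_comm, ← sum_removeNth]
        gcongr
        simpa only [Fintype.card_fin] using
          prod_add_half_le_one_add_sum_pow (a := k.removeNth ξ) fun j ↦ hξ (k.succAbove j)

end Diamond

/-- Upper bound for the measure of the closed diamond `D = {x ∈ ℝ^d_+ : |x - c|₁ ≤ M}` with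
`cᵢ = ξᵢ` for `i < d` and `c_d = ξ_d + M`:  `μ(D) ≤ C (1 + s - ξ_d)^{d-1} e^{-s}` where
`s = |ξ|₁`, with `C` depending only on `d`. -/
theorem diamond_touching_axis_measure_bound (d : ℕ) (hd : 2 ≤ d) :
    ∃ C : ℝ, 0 < C ∧
      ∀ ξ : Fin d → ℝ, (∀ i, 0 < ξ i) → ∀ M : ℝ, 0 < M →
        expMeasure d {x : Fin d → ℝ | (∀ i, 0 < x i) ∧
            ∑ i, |x i - (if (i : ℕ) = d - 1 then ξ i + M else ξ i)| ≤ M}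
          ≤ ENNReal.ofReal
              (C * (1 + ((∑ i, ξ i) - ξ ⟨d - 1, by omega⟩)) ^ (d - 1)
                * Real.exp (-∑ i, ξ i)) := by
  obtain ⟨n, rfl⟩ : ∃ n, d = n + 1 := ⟨d - 1, by omega⟩
  refine ⟨1, one_pos, fun ξ hξ M _ ↦ ?_⟩
  simpa [Fin.ext_iff, Fin.last] using
    diamond_touching_axis_measure_bound_general (Fin.last n) (fun i ↦ (hξ i).le) M
end

section
/- Let d ≥ 2. There is a constant C > 0 depending only on d such that the following holds. Let z ∈ ℝ^d_+ and r ≥ 1 be such that b := z₀ − r ≥ 2, where x₀ := Σ_{j=1}^d x_j for x ∈ ℝ^d, and let D = D(z,r) = {y ∈ ℝ^d_+ : |z − y|₁ < r}. Let ξ ∈ D. Then for every t ∈ (b, b + 2r) there exists a (d−1)-dimensional parallelepiped P_t contained in the hyperplane Π_t = {x ∈ ℝ^d : x₀ = t}, whose d−1 edge directions all belong to the set V of vectors obtained from (1,−1,0,…,0) by permuting coordinates, such that P_t contains the slice D_t = D ∩ Π_t, P_t contains the orthogonal projection ξ_t of ξ onto Π_t, and λ_t(P_t) ≤ C · [1 +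 max(t − b, ξ₀ − b)]^{d−1} · e^{b} · μ(D), where λ_t denotes (d−1)-dimensional Lebesgue (Hausdorff) measure on Π_t. -/
open MeasureTheory ENNReal

/-- The exponential measure `dμ(x) = exp(-|x₁|-⋯-|x_d|) dx` on `ℝ^d` (here on Euclidean
space); the diamond considered below is contained in `ℝ^d_+`, so this also computes the
restricted measure. -/
noncomputable def expMeasureE (d : ℕ) : Measure (EuclideanSpace ℝ (Fin d)) :=
  volume.withDensity (fun x => ENNReal.ofReal (Real.exp (-∑ i, |x i|)))

/-- The set `V` of vectors obtained from `(1,-1,0,…,0)` by permuting the coordinates. -/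
def permV (d : ℕ) : Set (EuclideanSpace ℝ (Fin d)) :=
  {v | ∃ i j : Fin d, i ≠ j ∧ v i = 1 ∧ v j = -1 ∧ ∀ k, k ≠ i → k ≠ j → v k = 0}

/-! Write `x₀ = ∑ i, x i` and `b = z₀ - r`. A point `y > 0` lies in `D(z, r)` iff
`2 ∑ i, (y i - z i)⁺ < y₀ - b`. If moreover `y₀ ≤ b + T`, then each `y i` lies in an interval of
length `a i + T`, where `a i = min (z i) (min b r)`. Hence, for any `m`, the slice and the projected
point, which lies within `T` of `ξ`, fit in a parallelepiped with edges `(a j + 3 T) (e_j - e_m)`,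
`j ≠ m`, whose measure is at most a constant times `(1 + T) ^ (d - 1) ∏_{j ≠ m} (1 + a j)`.

Conversely, since `∑ i, a i / d ≤ r`, lowering `z i` by `a i / d` leaves a coordinate sum of at
least `b`, and rescaling gives `u ≥ 0` with `u₀ = b` and `u i + a i / d ≤ z i`. Some coordinate `m`
has `u m ≥ b / d`. A small multiple of the box with sides `1 + a j`, `j ≠ m`, placed at `u` and
lifted to a thin slab of levels just above `b`, then lies in `D(z, r)`: the coordinate `m` stays in
`(0, z m]` and absorbs the shear. So `exp b * μ (D(z, r))` is at least a constant times
`∏_{j ≠ m} (1 + a j)`. -/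

section Parallelepiped

variable {ι E : Type*} [Fintype ι]

/-- The parallelepiped with vertex `p` and edges `w i`. Mathlib's `parallelepiped w` is the case
`p = 0`. -/
def parallelepipedAt [AddCommMonoid E] [Module ℝ E] (p : E) (w : ι → E) : Set E :=
  (fun c : ι → ℝ => p + ∑ i, c i • w i) '' Set.Icc 0 1

variable [NormedAddCommGroup E] [NormedSpace ℝ E]

lemma lipschitzWith_add_sum_smul (p : E) (v : ι → E) :
    LipschitzWith (∑ i, ‖v i‖₊) (fun c : ι → ℝ => p + ∑ i, c i • v i) := by
  refine LipschitzWith.of_dist_le_mul fun a b => ?_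
  calc dist (p + ∑ i, a i • v i) (p + ∑ i, b i • v i)
      = ‖∑ i, (a i - b i) • v i‖ := by
        rw [dist_add_left, dist_eq_norm, ← Finset.sum_sub_distrib]
        simp only [sub_smul]
    _ ≤ ∑ i, ‖v i‖ * dist a b := norm_sum_le_of_le _ fun i _ => by
        rw [norm_smul, mul_comm]
        exact mul_le_mul_of_nonneg_left (dist_le_pi_dist a b i) (norm_nonneg _)
    _ = (∑ i, ‖v i‖₊ : NNReal) * dist a b := by
        rw [← Finset.sum_mul]; push_cast; rfl

lemma parallelepipedAt_smul_subset (p : E) (v : ι → E) {l : ι → ℝ} (hl : 0 ≤ l) :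
    parallelepipedAt p (fun i => l i • v i) ⊆
      (fun c : ι → ℝ => p + ∑ i, c i • v i) '' Set.Icc 0 l := by
  rintro _ ⟨c, ⟨hc0, hc1⟩, rfl⟩
  exact ⟨c * l, ⟨mul_nonneg hc0 hl, mul_le_of_le_one_left hl hc1⟩, by simp [mul_smul]⟩

theorem hausdorffMeasure_parallelepipedAt_smul_le [MeasurableSpace E] [BorelSpace E]
    (p : E) (v : ι → E) {l : ι → ℝ} (hl : 0 ≤ l) :
    μH[Fintype.card ι] (parallelepipedAt p fun i => l i • v i) ≤
      ENNReal.ofReal ((∑ i, ‖v i‖) ^ Fintype.card ι * ∏ i, l i) := by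
  have hcoe : ((∑ i, ‖v i‖₊ : NNReal) : ℝ≥0∞) = ENNReal.ofReal (∑ i, ‖v i‖) := by
    rw [← ENNReal.ofReal_coe_nnreal]; push_cast; rfl
  calc μH[Fintype.card ι] (parallelepipedAt p fun i => l i • v i)
      ≤ μH[Fintype.card ι] ((fun c : ι → ℝ => p + ∑ i, c i • v i) '' Set.Icc 0 l) :=
        measure_mono (parallelepipedAt_smul_subset p v hl)
    _ ≤ ((∑ i, ‖v i‖₊ : NNReal) : ℝ≥0∞) ^ (Fintype.card ι : ℝ) *
          μH[Fintype.card ι] (Set.Icc 0 l) :=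
        (lipschitzWith_add_sum_smul p v).hausdorffMeasure_image_le (Nat.cast_nonneg _) _
    _ = ENNReal.ofReal ((∑ i, ‖v i‖) ^ Fintype.card ι * ∏ i, l i) := by
        rw [hausdorffMeasure_pi_real, Real.volume_Icc_pi, ENNReal.rpow_natCast, hcoe,
          ENNReal.ofReal_mul (by positivity), ENNReal.ofReal_pow (by positivity),
          ENNReal.ofReal_prod_of_nonneg fun i _ => hl i]
        simp only [Pi.zero_apply, sub_zero]

end Parallelepiped

section Edge

variable {n : ℕ} (m : Fin (n + 1))

/-- The vectors `e_j - e_m`, `j ≠ m`, of `permV (n + 1)`, indexed through `m.succAbove`; they form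
a basis of the direction space of the hyperplanes `∑ i, x i = t`. -/
noncomputable def edge (j : Fin n) : EuclideanSpace ℝ (Fin (n + 1)) :=
  EuclideanSpace.single (m.succAbove j) 1 - EuclideanSpace.single m 1

lemma edge_apply_self (j : Fin n) : edge m j m = -1 := by
  simp [edge, Fin.ne_succAbove]

lemma edge_apply_succAbove (j k : Fin n) :
    edge m j (m.succAbove k) = if k = j then 1 else 0 := by
  simp [edge, Fin.succAbove_ne]

lemma edge_mem_permV (j : Fin n) : edge m j ∈ permV (n + 1) := by
  refine ⟨m.succAbove j, m, Fin.succAbove_ne m j, by simp [edge_apply_succAbove],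
    edge_apply_self m j, fun k hkj hkm => ?_⟩
  obtain ⟨k, rfl⟩ := Fin.exists_succAbove_eq hkm
  rw [edge_apply_succAbove, if_neg (ne_of_apply_ne m.succAbove hkj)]

lemma norm_edge_le (j : Fin n) : ‖edge m j‖ ≤ 2 :=
  (norm_sub_le _ _).trans (by norm_num)

lemma eq_sum_smul_edge {x : EuclideanSpace ℝ (Fin (n + 1))} (hx : ∑ i, x i = 0) :
    x = ∑ j, x (m.succAbove j) • edge m j := by
  ext i
  simp only [WithLp.ofLp_sum, Finset.sum_apply, PiLp.smul_apply, smul_eq_mul]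
  rcases eq_or_ne i m with rfl | him
  · rw [Fin.sum_univ_succAbove _ i] at hx
    simp only [edge_apply_self, mul_neg, mul_one, Finset.sum_neg_distrib]
    linarith
  · obtain ⟨k, rfl⟩ := Fin.exists_succAbove_eq him
    simp [edge_apply_succAbove]

lemma mem_span_range_smul_edge {l : Fin n → ℝ} (hl : ∀ j, l j ≠ 0)
    {x : EuclideanSpace ℝ (Fin (n + 1))} (hx : ∑ i, x i = 0) :
    x ∈ Submodule.span ℝ (Set.range fun j => l j • edge m j) := by
  rw [eq_sum_smul_edge m hx]
  refine Submodule.sum_smul_mem _ _ fun j _ => ?_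
  rw [← inv_smul_smul₀ (hl j) (edge m j)]
  exact Submodule.smul_mem _ _ (Submodule.subset_span ⟨j, rfl⟩)

lemma mem_parallelepipedAt_smul_edge {l : Fin n → ℝ} {p x : EuclideanSpace ℝ (Fin (n + 1))}
    (hsum : ∑ i, x i = ∑ i, p i)
    (hx : ∀ j, x (m.succAbove j) ∈ Set.Icc (p (m.succAbove j)) (p (m.succAbove j) + l j)) :
    x ∈ parallelepipedAt p (fun j => l j • edge m j) := by
  have h0 (j) : 0 ≤ x (m.succAbove j) - p (m.succAbove j) := sub_nonneg.2 (hx j).1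
  have hl (j) : x (m.succAbove j) - p (m.succAbove j) ≤ l j := sub_le_iff_le_add'.2 (hx j).2
  refine ⟨fun j => (x (m.succAbove j) - p (m.succAbove j)) / l j,
    ⟨fun j => div_nonneg (h0 j) ((h0 j).trans (hl j)),
      fun j => div_le_one_of_le₀ (hl j) ((h0 j).trans (hl j))⟩, ?_⟩
  have hcancel (j) : (x (m.succAbove j) - p (m.succAbove j)) / l j * l j =
      (x - p) (m.succAbove j) :=
    div_mul_cancel_of_imp fun h => le_antisymm (h ▸ hl j) (h0 j)
  simp only [smul_smul, hcancel]
  rw [← eq_sum_smul_edge m (x := x - p) (by simp [hsum]), add_sub_cancel]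

lemma exists_sum_eq_forall_succAbove_eq (t : ℝ) (q : Fin n → ℝ) :
    ∃ p : EuclideanSpace ℝ (Fin (n + 1)), ∑ i, p i = t ∧ ∀ j, p (m.succAbove j) = q j :=
  ⟨WithLp.toLp 2 (m.insertNth (t - ∑ j, q j) q), by simp [Fin.sum_insertNth], by simp⟩

lemma hausdorffMeasure_parallelepipedAt_smul_edge_le (p : EuclideanSpace ℝ (Fin (n + 1)))
    {l : Fin n → ℝ} (hl : 0 ≤ l) :
    μH[n] (parallelepipedAt p fun j => l j • edge m j) ≤
      ENNReal.ofReal ((2 * (n + 1)) ^ n * ∏ j, l j) := by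
  have hsum : ∑ j, ‖edge m j‖ ≤ 2 * (n + 1) := by
    calc ∑ j, ‖edge m j‖ ≤ ∑ _j : Fin n, (2 : ℝ) := Finset.sum_le_sum fun j _ => norm_edge_le m j
      _ ≤ 2 * (n + 1) := by
        simp only [Finset.sum_const, Finset.card_univ, Fintype.card_fin, nsmul_eq_mul]
        linarith
  have hprod : 0 ≤ ∏ j, l j := Finset.prod_nonneg fun j _ => hl j
  have hle := hausdorffMeasure_parallelepipedAt_smul_le p (edge m) hl
  rw [Fintype.card_fin] at hle
  exact hle.trans (ENNReal.ofReal_le_ofReal (by gcongr))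

end Edge

section ShearedBox

variable {n : ℕ} (m : Fin (n + 1))

lemma volume_preserving_removeNth_sum :
    MeasurePreserving (fun y : Fin (n + 1) → ℝ => (m.removeNth y, ∑ i, y i)) := by
  have hsplit : MeasurePreserving (fun y : Fin (n + 1) → ℝ => (m.removeNth y, y m)) :=
    Measure.measurePreserving_swap.comp (volume_preserving_piFinSuccAbove (fun _ => ℝ) m)
  have hshear : MeasurePreserving (fun q : (Fin n → ℝ) × ℝ => (q.1, q.2 + ∑ j, q.1 j)) :=
    (MeasurePreserving.id volume).skew_product (g := fun (a : Fin n → ℝ) x => x + ∑ j, a j)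
      (by fun_prop) (Filter.Eventually.of_forall fun _ => map_add_right_eq_self _ _)
  convert hshear.comp hsplit using 2 with y
  simp [Fin.sum_univ_succAbove _ m, Fin.removeNth]

/-- The box `∏ (a j, b j)` in the coordinates `j ≠ m`, lifted to the slab `α < ∑ i, y i < β`. -/
def shearedBox (a b : Fin n → ℝ) (α β : ℝ) : Set (EuclideanSpace ℝ (Fin (n + 1))) :=
  {y | (∀ j, y (m.succAbove j) ∈ Set.Ioo (a j) (b j)) ∧ ∑ i, y i ∈ Set.Ioo α β}

theorem volume_shearedBox (a b : Fin n → ℝ) (α β : ℝ) :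
    volume (shearedBox m a b α β) =
      (∏ j, ENNReal.ofReal (b j - a j)) * ENNReal.ofReal (β - α) := by
  have hbox : MeasurableSet ((Set.univ.pi fun j => Set.Ioo (a j) (b j)) ×ˢ Set.Ioo α β) :=
    (MeasurableSet.univ_pi fun _ => measurableSet_Ioo).prod measurableSet_Ioo
  have hpre := ((volume_preserving_removeNth_sum m).comp
    (PiLp.volume_preserving_ofLp (Fin (n + 1)))).measure_preimage hbox.nullMeasurableSet
  rw [Measure.volume_eq_prod, Measure.prod_prod, Real.volume_pi_Ioo, Real.volume_Ioo] at hpre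
  rw [← hpre]
  congr 1
  ext y
  simp [shearedBox, Fin.removeNth]

end ShearedBox

lemma ofReal_exp_neg_mul_volume_le_expMeasureE {d : ℕ} {S : Set (EuclideanSpace ℝ (Fin d))}
    {β : ℝ} (hpos : ∀ y ∈ S, ∀ i, 0 ≤ y i) (hsum : ∀ y ∈ S, ∑ i, y i ≤ β) :
    ENNReal.ofReal (Real.exp (-β)) * volume S ≤ expMeasureE d S := by
  rw [expMeasureE, withDensity_apply', ← setLIntegral_const]
  refine setLIntegral_mono (by fun_prop) fun y hy => ?_
  gcongr
  simpa only [abs_of_nonneg (hpos y hy _)] using hsum y hy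

lemma exists_nonneg_le_sum_eq {ι : Type*} [Fintype ι] {h : ι → ℝ} {b : ℝ} (hh : 0 ≤ h)
    (hb : 0 ≤ b) (hbh : b ≤ ∑ i, h i) : ∃ u : ι → ℝ, 0 ≤ u ∧ u ≤ h ∧ ∑ i, u i = b := by
  have hsum : 0 ≤ ∑ i, h i := hb.trans hbh
  refine ⟨fun i => b / (∑ i, h i) * h i, fun i => mul_nonneg (div_nonneg hb hsum) (hh i),
    fun i => mul_le_of_le_one_left (hh i) (div_le_one_of_le₀ hbh hsum), ?_⟩
  rw [← Finset.mul_sum]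
  exact div_mul_cancel_of_imp fun h0 => le_antisymm (h0 ▸ hbh) hb

section Diamond

variable {ι : Type*} [Fintype ι] {z y : EuclideanSpace ℝ ι} {r : ℝ}

/-- The set `D(z, r)`: the part of the open `ℓ¹`-ball around `z` lying in the open positive
orthant. -/
def diamond (z : EuclideanSpace ℝ ι) (r : ℝ) : Set (EuclideanSpace ℝ ι) :=
  {y | (∀ i, 0 < y i) ∧ ∑ i, |z i - y i| < r}

/-- The number `b = z₀ - r`, the infimum of the coordinate sum on the `ℓ¹`-ball around `z`. -/
def diamondBase (z : EuclideanSpace ℝ ι) (r : ℝ) : ℝ := ∑ i, z i - r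

/-- The lower bound `max 0 (z i - r)` for the `i`-th coordinate on `diamond z r`. -/
def diamondLower (z : EuclideanSpace ℝ ι) (r : ℝ) (i : ι) : ℝ := max 0 (z i - r)

/-- The length scale of the range of the `i`-th coordinate on the points of `diamond z r` whose
coordinate sum is close to `diamondBase z r`. -/
def diamondWidth (z : EuclideanSpace ℝ ι) (r : ℝ) (i : ι) : ℝ := min (z i) (min (diamondBase z r) r)

lemma diamondWidth_nonneg (hz : ∀ i, 0 ≤ z i) (hr : 0 ≤ r) (hb : 0 ≤ diamondBase z r) (i : ι) :
    0 ≤ diamondWidth z r i :=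
  le_min (hz i) (le_min hb hr)

lemma diamondWidth_le_apply (i : ι) : diamondWidth z r i ≤ z i :=
  min_le_left _ _

lemma diamondWidth_le_base (i : ι) : diamondWidth z r i ≤ diamondBase z r :=
  (min_le_right _ _).trans (min_le_left _ _)

lemma diamondWidth_le_radius (i : ι) : diamondWidth z r i ≤ r :=
  (min_le_right _ _).trans (min_le_right _ _)

lemma min_apply_base_le_diamondLower_add_diamondWidth (i : ι) :
    min (z i) (diamondBase z r) ≤ diamondLower z r i + diamondWidth z r i := by
  rw [diamondLower, diamondWidth, ← min_assoc]
  rcases min_cases (min (z i) (diamondBase z r)) r with h | h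
  · linarith [le_max_left 0 (z i - r)]
  · linarith [le_max_right 0 (z i - r), min_le_left (z i) (diamondBase z r)]

lemma mem_diamond_iff :
    y ∈ diamond z r ↔ (∀ i, 0 < y i) ∧ 2 * ∑ i, (y i - z i)⁺ < ∑ i, y i - diamondBase z r := by
  have habs (i) : |z i - y i| = 2 * (y i - z i)⁺ - y i + z i := by
    rw [abs_sub_comm]
    linarith [posPart_add_negPart (y i - z i), posPart_sub_negPart (y i - z i)]
  have hsum : ∑ i, |z i - y i| = 2 * ∑ i, (y i - z i)⁺ - ∑ i, y i + ∑ i, z i := by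
    simp only [habs, Finset.sum_add_distrib, Finset.sum_sub_distrib, Finset.mul_sum]
  rw [diamond, Set.mem_ofPred_eq, hsum, diamondBase]
  refine and_congr_right fun _ => ⟨fun h => ?_, fun h => ?_⟩ <;> linarith

lemma diamondBase_lt_sum (hy : y ∈ diamond z r) : diamondBase z r < ∑ i, y i := by
  have hnonneg : 0 ≤ ∑ i, (y i - z i)⁺ := Finset.sum_nonneg fun i _ => posPart_nonneg _
  linarith [(mem_diamond_iff.1 hy).2]

lemma diamondLower_le_apply (hy : y ∈ diamond z r) (i : ι) : diamondLower z r i ≤ y i := by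
  refine max_le (hy.1 i).le ?_
  have hi : |z i - y i| ≤ ∑ i, |z i - y i| :=
    Finset.single_le_sum (f := fun i => |z i - y i|) (fun i _ => abs_nonneg _) (Finset.mem_univ i)
  linarith [le_abs_self (z i - y i), hy.2]

lemma apply_le_diamondLower_add_diamondWidth_add (hy : y ∈ diamond z r) (i : ι) :
    y i ≤ diamondLower z r i + diamondWidth z r i + (∑ i, y i - diamondBase z r) := by
  have hpos : (y i - z i)⁺ ≤ ∑ i, (y i - z i)⁺ :=
    Finset.single_le_sum (f := fun i => (y i - z i)⁺) (fun i _ => posPart_nonneg _)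
      (Finset.mem_univ i)
  have hyz : y i - (∑ i, y i - diamondBase z r) ≤ z i := by
    linarith [(mem_diamond_iff.1 hy).2, le_posPart (y i - z i), posPart_nonneg (y i - z i)]
  have hyb : y i - (∑ i, y i - diamondBase z r) ≤ diamondBase z r := by
    linarith [Finset.single_le_sum (fun i _ => (hy.1 i).le) (Finset.mem_univ i)]
  linarith [(le_min hyz hyb).trans (min_apply_base_le_diamondLower_add_diamondWidth i)]

lemma exists_nonneg_le_sub_diamondWidth_sum_eq (hz : ∀ i, 0 ≤ z i) (hr : 0 ≤ r)
    (hb : 0 ≤ diamondBase z r) :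
    ∃ u : ι → ℝ, (∀ i, 0 ≤ u i) ∧ (∀ i, u i ≤ z i - diamondWidth z r i / Fintype.card ι) ∧
      ∑ i, u i = diamondBase z r := by
  refine exists_nonneg_le_sum_eq (fun i => ?_) hb ?_
  · have : Nonempty ι := ⟨i⟩
    have hcard : (1 : ℝ) ≤ Fintype.card ι := Nat.one_le_cast.2 Fintype.card_pos
    exact sub_nonneg.2 ((div_le_self (diamondWidth_nonneg hz hr hb i) hcard).trans
      (diamondWidth_le_apply i))
  · have hwidth : (∑ i, diamondWidth z r i) / Fintype.card ι ≤ r :=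
      div_le_of_le_mul₀ (Nat.cast_nonneg _) hr <| by
        simpa [mul_comm] using Finset.sum_le_sum fun i (_ : i ∈ Finset.univ) =>
          diamondWidth_le_radius (z := z) (r := r) i
    rw [Finset.sum_sub_distrib, ← Finset.sum_div]
    exact sub_le_sub_left hwidth _

lemma exists_base_div_card_le_and_min_le_diamondWidth [Nonempty ι] {u : ι → ℝ}
    (huz : ∀ i, u i ≤ z i) (husum : ∑ i, u i = diamondBase z r) (hb : 0 ≤ diamondBase z r) :
    ∃ m, diamondBase z r / Fintype.card ι ≤ u m ∧
      min (diamondBase z r / Fintype.card ι) r ≤ diamondWidth z r m := by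
  obtain ⟨m, -, hm⟩ : ∃ m ∈ Finset.univ, diamondBase z r / Fintype.card ι ≤ u m :=
    Finset.exists_le_of_sum_le Finset.univ_nonempty <| by
      simp [husum, mul_div_cancel₀]
  have hcard : (1 : ℝ) ≤ Fintype.card ι := Nat.one_le_cast.2 Fintype.card_pos
  exact ⟨m, hm, le_min ((min_le_left _ _).trans (hm.trans (huz m)))
    (min_le_min_right _ (div_le_self hb hcard))⟩

end Diamond

section DiamondMeasure

variable {n : ℕ} {z : EuclideanSpace ℝ (Fin (n + 1))} {r : ℝ} {m : Fin (n + 1)}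

lemma shearedBox_subset_diamond {u : Fin (n + 1) → ℝ} {s : Fin n → ℝ} {τ : ℝ}
    (hu : ∀ i, 0 ≤ u i) (husum : ∑ i, u i = diamondBase z r)
    (hs : 2 * ∑ j, (u (m.succAbove j) + s j - z (m.succAbove j))⁺ ≤ τ)
    (hm : u m + 2 * τ ≤ z m) (hsm : ∑ j, s j ≤ u m + τ) :
    shearedBox m (fun j => u (m.succAbove j)) (fun j => u (m.succAbove j) + s j)
      (diamondBase z r + τ) (diamondBase z r + 2 * τ) ⊆ diamond z r := by
  rintro y ⟨hybox, hylower, hyupper⟩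
  have hsplit := Fin.sum_univ_succAbove y m
  rw [Fin.sum_univ_succAbove _ m] at husum
  have hulower : ∑ j, u (m.succAbove j) ≤ ∑ j, y (m.succAbove j) :=
    Finset.sum_le_sum fun j _ => (hybox j).1.le
  have huupper : ∑ j, y (m.succAbove j) ≤ ∑ j, u (m.succAbove j) + ∑ j, s j := by
    rw [← Finset.sum_add_distrib]
    exact Finset.sum_le_sum fun j _ => (hybox j).2.le
  have hexcess_m : (y m - z m)⁺ = 0 := posPart_eq_zero.2 (by linarith)
  have hexcess : ∑ j, (y (m.succAbove j) - z (m.succAbove j))⁺ ≤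
      ∑ j, (u (m.succAbove j) + s j - z (m.succAbove j))⁺ :=
    Finset.sum_le_sum fun j _ => posPart_mono (sub_le_sub_right (hybox j).2.le _)
  refine mem_diamond_iff.2 ⟨(Fin.forall_iff_succAbove m).2
    ⟨by linarith, fun j => (hu _).trans_lt (hybox j).1⟩, ?_⟩
  rw [Fin.sum_univ_succAbove (fun i => (y i - z i)⁺) m, hexcess_m]
  linarith

lemma sum_posPart_add_mul_add_sub_le {ι : Type*} [Fintype ι] {u w z : ι → ℝ} {δ ε : ℝ}
    (hδ : 0 ≤ δ) (hε : 0 ≤ ε) (h : ∀ i, u i + ε * w i ≤ z i) :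
    ∑ i, (u i + ε * (δ + w i) - z i)⁺ ≤ Fintype.card ι * (ε * δ) := by
  have hterm (i) : (u i + ε * (δ + w i) - z i)⁺ ≤ ε * δ :=
    sup_le (by linarith [h i]) (mul_nonneg hε hδ)
  simpa using Finset.sum_le_sum fun i (_ : i ∈ Finset.univ) => hterm i

lemma sum_mul_add_diamondWidth_succAbove_le (m : Fin (n + 1)) {δ ε : ℝ} (hε : 0 ≤ ε)
    (hb : δ ≤ diamondBase z r) :
    ∑ j, ε * (δ + diamondWidth z r (m.succAbove j)) ≤ 2 * n * ε * diamondBase z r := by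
  calc ∑ j, ε * (δ + diamondWidth z r (m.succAbove j))
      ≤ ∑ _j : Fin n, ε * (diamondBase z r + diamondBase z r) := by
        gcongr
        exact diamondWidth_le_base _
    _ = 2 * n * ε * diamondBase z r := by
        simp only [Finset.sum_const, Finset.card_univ, Fintype.card_fin, nsmul_eq_mul]
        ring

lemma exists_shearedBox_subset_diamond {δ ε τ : ℝ} (hδ : 0 ≤ δ) (hε : 0 ≤ ε)
    (hετ : 2 * (n + 1) * ε ≤ τ) (hτ : 2 * (n + 1) ^ 2 * τ ≤ 1)
    (hz : ∀ i, 0 ≤ z i) (hr : δ ≤ r) (hb : δ ≤ diamondBase z r) :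
    ∃ (m : Fin (n + 1)) (u : Fin n → ℝ),
      shearedBox m u (fun j => u j + ε * (δ + diamondWidth z r (m.succAbove j)))
        (diamondBase z r + τ * δ) (diamondBase z r + 2 * (τ * δ)) ⊆ diamond z r := by
  obtain ⟨u, hu, huz, husum⟩ :=
    exists_nonneg_le_sub_diamondWidth_sum_eq hz (hδ.trans hr) (hδ.trans hb)
  have hn : (0 : ℝ) ≤ n := n.cast_nonneg
  have hN : (0 : ℝ) < n + 1 := by positivity
  have hτ0 : 0 ≤ τ := le_trans (by positivity) hετ
  have hw (i) : 0 ≤ diamondWidth z r i := diamondWidth_nonneg hz (hδ.trans hr) (hδ.trans hb) i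
  obtain ⟨m, hum, hwm⟩ := exists_base_div_card_le_and_min_le_diamondWidth
    (fun i => (huz i).trans (sub_le_self _ (div_nonneg (hw i) (Nat.cast_nonneg _)))) husum
    (hδ.trans hb)
  simp only [Fintype.card_fin, Nat.cast_add_one] at huz hum hwm
  have hτ2 : 2 * τ ≤ 1 / (n + 1) ^ 2 := by rw [le_div_iff₀ (by positivity)]; linarith
  have hτ1 : τ ≤ 1 / (n + 1) := by
    rw [le_div_iff₀ hN]
    nlinarith [mul_nonneg (mul_nonneg hn hN.le) hτ0]
  have hε1 : ε ≤ 1 / (n + 1) := by nlinarith [mul_nonneg hn hε]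
  refine ⟨m, fun j => u (m.succAbove j), shearedBox_subset_diamond hu husum ?_ ?_ ?_⟩
  · have hεw (i) : u i + ε * diamondWidth z r i ≤ z i := by
      have hscale := mul_le_mul_of_nonneg_right hε1 (hw i)
      rw [one_div_mul_eq_div] at hscale
      linarith [huz i]
    have hexcess := sum_posPart_add_mul_add_sub_le hδ hε fun j => hεw (m.succAbove j)
    rw [Fintype.card_fin] at hexcess
    linarith [mul_le_mul_of_nonneg_right hετ hδ, mul_nonneg hε hδ]
  · have hδw : δ / (n + 1) ≤ diamondWidth z r m :=
      (le_min (by gcongr) ((div_le_self hδ (by linarith)).trans hr)).trans hwm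
    have hgap : 2 * τ * δ ≤ diamondWidth z r m / (n + 1) := by
      calc 2 * τ * δ ≤ 1 / (n + 1) ^ 2 * δ := by gcongr
        _ = δ / (n + 1) / (n + 1) := by field_simp
        _ ≤ diamondWidth z r m / (n + 1) := by gcongr
    linarith [huz m]
  · calc ∑ j, ε * (δ + diamondWidth z r (m.succAbove j))
        ≤ 2 * n * ε * diamondBase z r := sum_mul_add_diamondWidth_succAbove_le m hε hb
      _ ≤ 1 / (n + 1) * diamondBase z r := by
          have hb0 := hδ.trans hb
          gcongr
          linarith
      _ = diamondBase z r / (n + 1) := by ring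
      _ ≤ u m + τ * δ := by linarith [mul_nonneg hτ0 hδ]

lemma volume_shearedBox_add_mul {ε : ℝ} (hε : 0 ≤ ε) {u w : Fin n → ℝ} (hw : 0 ≤ w) (α β : ℝ) :
    volume (shearedBox m u (fun j => u j + ε * w j) α β) =
      ENNReal.ofReal (ε ^ n * ∏ j, w j) * ENNReal.ofReal (β - α) := by
  simp only [volume_shearedBox, add_sub_cancel_left]
  rw [← ENNReal.ofReal_prod_of_nonneg fun j _ => mul_nonneg hε (hw j), Finset.prod_mul_distrib,
    Finset.prod_const, Finset.card_univ, Fintype.card_fin]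

theorem exists_const_le_expMeasureE_diamond (n : ℕ) {δ : ℝ} (hδ : 0 < δ) :
    ∃ c : ℝ, 0 < c ∧ ∀ (z : EuclideanSpace ℝ (Fin (n + 1))) (r : ℝ), (∀ i, 0 ≤ z i) → δ ≤ r →
      δ ≤ diamondBase z r → ∃ m : Fin (n + 1),
        ENNReal.ofReal (c * (Real.exp (-diamondBase z r) *
            ∏ j, (δ + diamondWidth z r (m.succAbove j)))) ≤
          expMeasureE (n + 1) (diamond z r) := by
  obtain ⟨τ, hτ0, hτ⟩ : ∃ τ : ℝ, 0 < τ ∧ 2 * (n + 1) ^ 2 * τ ≤ 1 :=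
    ⟨1 / (2 * (n + 1) ^ 2), by positivity, (mul_one_div_cancel (by positivity)).le⟩
  obtain ⟨ε, hε0, hε⟩ : ∃ ε : ℝ, 0 < ε ∧ 2 * (n + 1) * ε ≤ τ :=
    ⟨τ / (2 * (n + 1)), by positivity, (mul_div_cancel₀ _ (by positivity)).le⟩
  refine ⟨Real.exp (-(2 * (τ * δ))) * (ε ^ n * (τ * δ)), by positivity, fun z r hz hr hb => ?_⟩
  obtain ⟨m, u, hsub⟩ := exists_shearedBox_subset_diamond hδ.le hε0.le hε hτ hz hr hb
  refine ⟨m, ?_⟩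
  set b := diamondBase z r
  set a : Fin n → ℝ := fun j => δ + diamondWidth z r (m.succAbove j)
  have ha : 0 ≤ a := fun j =>
    add_nonneg hδ.le (diamondWidth_nonneg hz (hδ.le.trans hr) (hδ.le.trans hb) _)
  have haprod : 0 ≤ ∏ j, a j := Finset.prod_nonneg fun j _ => ha j
  calc ENNReal.ofReal (Real.exp (-(2 * (τ * δ))) * (ε ^ n * (τ * δ)) *
          (Real.exp (-b) * ∏ j, a j))
      = ENNReal.ofReal (Real.exp (-(b + 2 * (τ * δ)))) *
          volume (shearedBox m u (fun j => u j + ε * a j) (b + τ * δ) (b + 2 * (τ * δ))) := by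
        rw [volume_shearedBox_add_mul hε0.le ha, ← ENNReal.ofReal_mul (by positivity),
          ← ENNReal.ofReal_mul (by positivity), neg_add, Real.exp_add]
        congr 1
        ring
    _ ≤ expMeasureE (n + 1)
          (shearedBox m u (fun j => u j + ε * a j) (b + τ * δ) (b + 2 * (τ * δ))) :=
        ofReal_exp_neg_mul_volume_le_expMeasureE (fun y hy i => ((hsub hy).1 i).le)
          fun y hy => hy.2.2.le
    _ ≤ expMeasureE (n + 1) (diamond z r) := measure_mono hsub

end DiamondMeasure

section HyperplaneProj

variable {ι : Type*} [Fintype ι] (t : ℝ) (x : EuclideanSpace ℝ ι)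

/-- The orthogonal projection of `x` onto the hyperplane `∑ i, y i = t`, by its explicit formula. -/
noncomputable def hyperplaneProj : EuclideanSpace ℝ ι :=
  WithLp.toLp 2 fun i => x i + (t - ∑ j, x j) / Fintype.card ι

variable [Nonempty ι]

lemma sum_hyperplaneProj : ∑ i, hyperplaneProj t x i = t := by
  simp [hyperplaneProj, Finset.sum_add_distrib, mul_div_cancel₀]

lemma abs_hyperplaneProj_sub_le (i : ι) : |hyperplaneProj t x i - x i| ≤ |t - ∑ j, x j| := by
  have hcard : (1 : ℝ) ≤ Fintype.card ι := Nat.one_le_cast.2 Fintype.card_pos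
  simpa [hyperplaneProj, abs_div] using div_le_self (abs_nonneg (t - ∑ j, x j)) hcard

end HyperplaneProj

lemma mem_parallelepipedAt_of_abs_sub_le {n : ℕ} {z y x p : EuclideanSpace ℝ (Fin (n + 1))}
    {r T : ℝ} {m : Fin (n + 1)} (hy : y ∈ diamond z r) (hyT : ∑ i, y i - diamondBase z r ≤ T)
    (hxy : ∀ i, |x i - y i| ≤ T) (hsum : ∑ i, x i = ∑ i, p i)
    (hp : ∀ j, p (m.succAbove j) = diamondLower z r (m.succAbove j) - T) :
    x ∈ parallelepipedAt p (fun j => (diamondWidth z r (m.succAbove j) + 3 * T) • edge m j) := by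
  refine mem_parallelepipedAt_smul_edge m hsum fun j => ?_
  obtain ⟨hlower, hupper⟩ := abs_le.1 (hxy (m.succAbove j))
  rw [hp]
  constructor
  · linarith [diamondLower_le_apply hy (m.succAbove j)]
  · linarith [apply_le_diamondLower_add_diamondWidth_add hy (m.succAbove j)]

lemma prod_add_mul_le {ι : Type*} [Fintype ι] {a : ι → ℝ} {δ k T : ℝ} (hδ : 0 < δ) (hk : 0 ≤ k)
    (hT : 0 ≤ T) (ha : ∀ i, 0 ≤ a i) :
    ∏ i, (a i + k * T) ≤
      (1 + k / δ) ^ Fintype.card ι * (1 + T) ^ Fintype.card ι * ∏ i, (δ + a i) := by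
  have hfactor (i) : a i + k * T ≤ (1 + k / δ) * (1 + T) * (δ + a i) := by
    have hexpand : (1 + k / δ) * (1 + T) * (δ + a i) =
        a i + k * T + (δ * (1 + T) + a i * T + k + k / δ * a i * (1 + T)) := by
      field_simp
      ring
    have := ha i
    rw [hexpand]
    exact le_add_of_nonneg_right (by positivity)
  calc ∏ i, (a i + k * T) ≤ ∏ i, (1 + k / δ) * (1 + T) * (δ + a i) :=
        Finset.prod_le_prod (fun i _ => add_nonneg (ha i) (mul_nonneg hk hT)) fun i _ => hfactor i
    _ = (1 + k / δ) ^ Fintype.card ι * (1 + T) ^ Fintype.card ι * ∏ i, (δ + a i) := by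
        simp [Finset.prod_mul_distrib, mul_pow]

theorem exists_const_hausdorffMeasure_parallelepipedAt_le (n : ℕ) {δ : ℝ} (hδ : 0 < δ) :
    ∃ C : ℝ, 0 < C ∧ ∀ (z : EuclideanSpace ℝ (Fin (n + 1))) (r : ℝ), (∀ i, 0 ≤ z i) → δ ≤ r →
      δ ≤ diamondBase z r → ∃ m : Fin (n + 1), ∀ (p : EuclideanSpace ℝ (Fin (n + 1))) (T : ℝ),
        0 ≤ T →
        μH[n] (parallelepipedAt p fun j =>
            (diamondWidth z r (m.succAbove j) + 3 * T) • edge m j) ≤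
          ENNReal.ofReal (C * (1 + T) ^ n * Real.exp (diamondBase z r)) *
            expMeasureE (n + 1) (diamond z r) := by
  obtain ⟨c, hc, hμ⟩ := exists_const_le_expMeasureE_diamond n hδ
  refine ⟨(2 * (n + 1)) ^ n * (1 + 3 / δ) ^ n / c, by positivity, fun z r hz hr hb => ?_⟩
  obtain ⟨m, hm⟩ := hμ z r hz hr hb
  refine ⟨m, fun p T hT => ?_⟩
  set a : Fin n → ℝ := fun j => diamondWidth z r (m.succAbove j)
  have ha (j) : 0 ≤ a j := diamondWidth_nonneg hz (hδ.le.trans hr) (hδ.le.trans hb) _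
  have hprod := prod_add_mul_le hδ zero_le_three hT ha
  rw [Fintype.card_fin] at hprod
  calc μH[n] (parallelepipedAt p fun j => (a j + 3 * T) • edge m j)
      ≤ ENNReal.ofReal ((2 * (n + 1)) ^ n * ∏ j, (a j + 3 * T)) :=
        hausdorffMeasure_parallelepipedAt_smul_edge_le m p fun j => by
          simpa using add_nonneg (ha j) (by linarith)
    _ ≤ ENNReal.ofReal ((2 * (n + 1)) ^ n *
          ((1 + 3 / δ) ^ n * (1 + T) ^ n * ∏ j, (δ + a j))) := by gcongr
    _ = ENNReal.ofReal ((2 * (n + 1)) ^ n * (1 + 3 / δ) ^ n / c * (1 + T) ^ n *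
            Real.exp (diamondBase z r)) *
          ENNReal.ofReal (c * (Real.exp (-diamondBase z r) * ∏ j, (δ + a j))) := by
        rw [← ENNReal.ofReal_mul (by positivity), Real.exp_neg]
        congr 1
        field_simp
    _ ≤ ENNReal.ofReal ((2 * (n + 1)) ^ n * (1 + 3 / δ) ^ n / c * (1 + T) ^ n *
            Real.exp (diamondBase z r)) * expMeasureE (n + 1) (diamond z r) := by gcongr

theorem diamond_slice_parallelepiped_general {d : ℕ} (hd : d ≠ 0) {δ : ℝ} (hδ : 0 < δ) :
    ∃ C : ℝ, 0 < C ∧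
      ∀ (z : EuclideanSpace ℝ (Fin d)) (r : ℝ), (∀ i, 0 ≤ z i) → δ ≤ r → δ ≤ diamondBase z r →
        ∀ ξ ∈ diamond z r, ∀ t : ℝ, diamondBase z r ≤ t →
          ∃ (p : EuclideanSpace ℝ (Fin d)) (w : Fin (d - 1) → EuclideanSpace ℝ (Fin d)),
            (∑ j, p j) = t ∧
            (∀ i, ∃ c : ℝ, 0 < c ∧ ∃ v ∈ permV d, w i = c • v) ∧
            (∀ x : EuclideanSpace ℝ (Fin d), (∑ j, x j) = 0 →
              x ∈ Submodule.span ℝ (Set.range w)) ∧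
            diamond z r ∩ {x | (∑ j, x j) = t} ⊆ parallelepipedAt p w ∧
            (∃ ξt : EuclideanSpace ℝ (Fin d),
              (∀ j, ξt j = ξ j + (t - ∑ j, ξ j) / d) ∧ ξt ∈ parallelepipedAt p w) ∧
            μH[(d : ℝ) - 1] (parallelepipedAt p w) ≤
              ENNReal.ofReal
                  (C * (1 + max (t - diamondBase z r) ((∑ j, ξ j) - diamondBase z r)) ^ (d - 1) *
                    Real.exp (diamondBase z r)) *
                expMeasureE d (diamond z r) := by
  obtain ⟨n, rfl⟩ := Nat.exists_eq_succ_of_ne_zero hd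
  obtain ⟨C, hC, hmeas⟩ := exists_const_hausdorffMeasure_parallelepipedAt_le n hδ
  refine ⟨C, hC, fun z r hz hr hb ξ hξ t ht => ?_⟩
  obtain ⟨m, hm⟩ := hmeas z r hz hr hb
  set T := max (t - diamondBase z r) (∑ j, ξ j - diamondBase z r)
  have htT : t - diamondBase z r ≤ T := le_max_left _ _
  have hξT : ∑ j, ξ j - diamondBase z r ≤ T := le_max_right _ _
  have hξb : diamondBase z r < ∑ j, ξ j := diamondBase_lt_sum hξ
  have hT : 0 < T := by linarith
  have hl (j) : 0 < diamondWidth z r (m.succAbove j) + 3 * T :=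
    add_pos_of_nonneg_of_pos (diamondWidth_nonneg hz (hδ.le.trans hr) (hδ.le.trans hb) _)
      (by linarith)
  obtain ⟨p, hpt, hp⟩ := exists_sum_eq_forall_succAbove_eq m t
    fun j => diamondLower z r (m.succAbove j) - T
  refine ⟨p, fun j => (diamondWidth z r (m.succAbove j) + 3 * T) • edge m j, hpt,
    fun j => ⟨_, hl j, edge m j, edge_mem_permV m j, rfl⟩,
    fun x hx => mem_span_range_smul_edge m (fun j => (hl j).ne') hx, ?_,
    ⟨hyperplaneProj t ξ, fun j => by simp [hyperplaneProj], ?_⟩, ?_⟩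
  · rintro y ⟨hy, rfl : ∑ j, y j = t⟩
    exact mem_parallelepipedAt_of_abs_sub_le hy htT (fun i => by simpa using hT.le) hpt.symm hp
  · have htξ : |t - ∑ j, ξ j| ≤ T := abs_le.2 ⟨by linarith, by linarith⟩
    exact mem_parallelepipedAt_of_abs_sub_le hξ hξT
      (fun i => (abs_hyperplaneProj_sub_le t ξ i).trans htξ)
      ((sum_hyperplaneProj t ξ).trans hpt.symm) hp
  · simpa using hm p T hT.le

/-- Proposition: slices of a diamond `D = D(z,r) ⊆ ℝ^d_+` with `b = z₀ - r ≥ 2`, `r ≥ 1`.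
For `ξ ∈ D` and `t ∈ (b, b+2r)` there is a `(d-1)`-dimensional parallelepiped `P_t ⊆ Π_t`
with edge directions from `V`, containing the slice `D ∩ Π_t` and the projection `ξ_t`
of `ξ` onto `Π_t`, with `λ_t(P_t) ≤ C [1 + max(t-b, ξ₀-b)]^{d-1} e^b μ(D)`. -/
theorem diamond_slice_parallelepiped (d : ℕ) (hd : 2 ≤ d) :
    ∃ C : ℝ, 0 < C ∧
      ∀ (z : EuclideanSpace ℝ (Fin d)) (r : ℝ), (∀ i, 0 < z i) → 1 ≤ r →
        2 ≤ (∑ j, z j) - r →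
        ∀ ξ ∈ {y : EuclideanSpace ℝ (Fin d) | (∀ i, 0 < y i) ∧ ∑ i, |z i - y i| < r},
          ∀ t : ℝ, (∑ j, z j) - r < t → t < (∑ j, z j) + r →
            ∃ (p : EuclideanSpace ℝ (Fin d)) (w : Fin (d - 1) → EuclideanSpace ℝ (Fin d)),
              (∑ j, p j) = t ∧
              (∀ i, ∃ c : ℝ, 0 < c ∧ ∃ v ∈ permV d, w i = c • v) ∧
              (∀ x : EuclideanSpace ℝ (Fin d), (∑ j, x j) = 0 →
                x ∈ Submodule.span ℝ (Set.range w)) ∧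
              {y : EuclideanSpace ℝ (Fin d) | (∀ i, 0 < y i) ∧ ∑ i, |z i - y i| < r}
                  ∩ {x | (∑ j, x j) = t}
                ⊆ (fun c : Fin (d - 1) → ℝ => p + ∑ i, c i • w i) '' Set.Icc 0 1 ∧
              (∃ ξt : EuclideanSpace ℝ (Fin d),
                (∀ j, ξt j = ξ j + (t - ∑ j, ξ j) / d) ∧
                ξt ∈ (fun c : Fin (d - 1) → ℝ => p + ∑ i, c i • w i) '' Set.Icc 0 1) ∧
              μH[(d : ℝ) - 1]
                  ((fun c : Fin (d - 1) → ℝ => p + ∑ i, c i • w i) '' Set.Icc 0 1)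
                ≤ ENNReal.ofReal
                    (C * (1 + max (t - ((∑ j, z j) - r)) ((∑ j, ξ j) - ((∑ j, z j) - r)))
                        ^ (d - 1)
                      * Real.exp ((∑ j, z j) - r))
                  * expMeasureE d
                      {y : EuclideanSpace ℝ (Fin d) |
                        (∀ i, 0 < y i) ∧ ∑ i, |z i - y i| < r} := by
  obtain ⟨C, hC, hslice⟩ :=
    diamond_slice_parallelepiped_general (Nat.ne_zero_of_lt hd) one_pos
  exact ⟨C, hC, fun z r hz hr hb ξ hξ t ht _ =>
    hslice z r (fun i => (hz i).le) hr (one_le_two.trans hb) ξ hξ t ht.le⟩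
end

section
/- Let m ≥ 2, let a₁,…,a_m > 0 and R > 0, and define E = {y ∈ ∏_{i=1}^m (0, aᵢ) : Σ_{i=1}^m yᵢ < R}. Then E is contained in the m-dimensional rectangle Ẽ = ∏_{i=1}^m (0, min(aᵢ, R)), and the Lebesgue measures satisfy c · ∏_{i=1}^m min(aᵢ, R) ≤ |E| ≤ ∏_{i=1}^m min(aᵢ, R) = |Ẽ|, where one may take c = m^{−m}; in particular |E| ≃ |Ẽ| with constants depending only on m. -/
open MeasureTheory ENNReal

/-!
On `E` each coordinate is at most the sum of all of them, hence less than `R`, so `E ⊆ Ẽ`.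
Conversely `E` contains `Ẽ` shrunk by the factor `1 / m`: there each of the `m` coordinates is less
than `R / m`. The shrunk rectangle has `m⁻ᵐ` times the volume of `Ẽ`.
-/

/-- The box `∏ (0, aᵢ)` cut off by the half-space `∑ yᵢ < R`: the set `E` of the theorem, for an
arbitrary finite index type. -/
def truncatedBox {ι : Type*} [Fintype ι] (a : ι → ℝ) (R : ℝ) : Set (ι → ℝ) :=
  {y | (∀ i, y i ∈ Set.Ioo 0 (a i)) ∧ ∑ i, y i < R}

section

variable {ι : Type*} [Fintype ι] {a : ι → ℝ} {R : ℝ}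

theorem truncatedBox_subset_pi_Ioo_min :
    truncatedBox a R ⊆ Set.univ.pi (fun i => Set.Ioo 0 (min (a i) R)) := by
  rintro y ⟨hy, hsum⟩ i -
  have hle_sum : y i ≤ ∑ j, y j :=
    Finset.single_le_sum (fun j _ => (hy j).1.le) (Finset.mem_univ i)
  exact ⟨(hy i).1, lt_min (hy i).2 (hle_sum.trans_lt hsum)⟩

theorem pi_Ioo_min_div_card_subset_truncatedBox (hR : 0 < R) :
    Set.univ.pi (fun i => Set.Ioo 0 (min (a i) R / Fintype.card ι)) ⊆ truncatedBox a R := by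
  intro y hy
  rcases isEmpty_or_nonempty ι with _ | _
  · exact ⟨isEmptyElim, by simpa using hR⟩
  have hcard : (1 : ℝ) ≤ Fintype.card ι := mod_cast Fintype.card_pos
  have hpos (i : ι) : 0 < y i := (hy i trivial).1
  have hmul_lt (i : ι) : y i * Fintype.card ι < min (a i) R :=
    (lt_div_iff₀ (by positivity)).1 (hy i trivial).2
  refine ⟨fun i => ⟨hpos i, ?_⟩, ?_⟩
  · calc
      y i ≤ y i * Fintype.card ι := le_mul_of_one_le_right (hpos i).le hcard
      _ < a i := (hmul_lt i).trans_le (min_le_left _ _)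
  · have hlt (i : ι) : y i < R / Fintype.card ι :=
      (lt_div_iff₀ (by positivity)).2 ((hmul_lt i).trans_le (min_le_right _ _))
    calc
      ∑ i, y i < ∑ _i : ι, R / Fintype.card ι :=
        Finset.sum_lt_sum_of_nonempty Finset.univ_nonempty fun i _ => hlt i
      _ = R := by
        rw [Finset.sum_const, Finset.card_univ, nsmul_eq_mul, mul_div_cancel₀ R (by positivity)]

theorem volume_pi_Ioo_zero {b : ι → ℝ} (hb : ∀ i, 0 ≤ b i) :
    volume (Set.univ.pi fun i => Set.Ioo 0 (b i)) = ENNReal.ofReal (∏ i, b i) := by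
  simp only [Real.volume_pi_Ioo, sub_zero, ENNReal.ofReal_prod_of_nonneg fun i _ => hb i]

theorem ofReal_inv_card_pow_mul_prod_min_le_volume_truncatedBox (ha : ∀ i, 0 ≤ a i) (hR : 0 < R) :
    ENNReal.ofReal (((Fintype.card ι : ℝ) ^ Fintype.card ι)⁻¹ * ∏ i, min (a i) R)
      ≤ volume (truncatedBox a R) := by
  have hside (i : ι) : 0 ≤ min (a i) R / Fintype.card ι :=
    div_nonneg (le_min (ha i) hR.le) (Nat.cast_nonneg _)
  calc
    ENNReal.ofReal (((Fintype.card ι : ℝ) ^ Fintype.card ι)⁻¹ * ∏ i, min (a i) R)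
      = ENNReal.ofReal (∏ i, min (a i) R / Fintype.card ι) := by
        rw [Finset.prod_div_distrib, Finset.prod_const, Finset.card_univ, div_eq_inv_mul]
    _ = volume (Set.univ.pi fun i => Set.Ioo 0 (min (a i) R / Fintype.card ι)) :=
        (volume_pi_Ioo_zero hside).symm
    _ ≤ volume (truncatedBox a R) := measure_mono (pi_Ioo_min_div_card_subset_truncatedBox hR)

theorem simplex_box_measure_general (ha : ∀ i, 0 ≤ a i) (hR : 0 < R) :
    truncatedBox a R ⊆ Set.univ.pi (fun i => Set.Ioo 0 (min (a i) R)) ∧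
    volume (Set.univ.pi fun i => Set.Ioo 0 (min (a i) R))
        = ENNReal.ofReal (∏ i, min (a i) R) ∧
    ENNReal.ofReal (((Fintype.card ι : ℝ) ^ Fintype.card ι)⁻¹ * ∏ i, min (a i) R)
        ≤ volume (truncatedBox a R) ∧
    volume (truncatedBox a R) ≤ ENNReal.ofReal (∏ i, min (a i) R) := by
  have hvol : volume (Set.univ.pi fun i => Set.Ioo 0 (min (a i) R))
      = ENNReal.ofReal (∏ i, min (a i) R) :=
    volume_pi_Ioo_zero fun i => le_min (ha i) hR.le
  exact ⟨truncatedBox_subset_pi_Ioo_min, hvol,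
    ofReal_inv_card_pow_mul_prod_min_le_volume_truncatedBox ha hR,
    (measure_mono truncatedBox_subset_pi_Ioo_min).trans_eq hvol⟩

end

/-- For `m ≥ 2`, `a₁,…,a_m > 0` and `R > 0`, the set
`E = {y ∈ ∏ (0,aᵢ) : Σ yᵢ < R}` is contained in the rectangle
`Ẽ = ∏ (0, min(aᵢ,R))`, and `|E| ≃ |Ẽ| = ∏ min(aᵢ,R)`, with lower constant `m^{-m}`. -/
theorem simplex_box_measure (m : ℕ) (hm : 2 ≤ m) (a : Fin m → ℝ) (ha : ∀ i, 0 < a i)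
    (R : ℝ) (hR : 0 < R) :
    {y : Fin m → ℝ | (∀ i, y i ∈ Set.Ioo 0 (a i)) ∧ ∑ i, y i < R}
        ⊆ Set.univ.pi (fun i => Set.Ioo 0 (min (a i) R)) ∧
    volume (Set.univ.pi (fun i => Set.Ioo (0 : ℝ) (min (a i) R)))
        = ENNReal.ofReal (∏ i, min (a i) R) ∧
    ENNReal.ofReal (((m : ℝ) ^ m)⁻¹ * ∏ i, min (a i) R)
        ≤ volume {y : Fin m → ℝ | (∀ i, y i ∈ Set.Ioo 0 (a i)) ∧ ∑ i, y i < R} ∧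
    volume {y : Fin m → ℝ | (∀ i, y i ∈ Set.Ioo 0 (a i)) ∧ ∑ i, y i < R}
        ≤ ENNReal.ofReal (∏ i, min (a i) R) := by
  simpa only [truncatedBox, Fintype.card_fin] using
    simplex_box_measure_general (fun i => (ha i).le) hR
end

section
/- There exist absolute constants c, C > 0 such that the following holds. Let 𝔞 > 2, r > √2, and m = (m₁, m₂) ∈ ℝ² satisfy m₂ ≥ 𝔞, (m₁ − 𝔞)² + (m₂ − 𝔞)² = r², and r/√2 < m₁ − 𝔞 ≤ r. For 0 < h ≤ r/√2 let ξ(h) be the unique positive number satisfying (m₁ − 𝔞 − h)² + (m₂ − 𝔞 + ξ(h))² = r². Then c · r h / (m₂ − 𝔞 + √(r h)) ≤ ξ(h) ≤ C · r h / (m₂ − 𝔞 + √(r h)); explicitly, ξ(h) = (2(m₁ − 𝔞)h − h²) / (m₂ − 𝔞 + √((m₂ − 𝔞)² + 2(m₁ − 𝔞)h − h²)). -/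
/-!
Put `p = m₁ - 𝔞` and `q = m₂ - 𝔞`. The vertical line through `(𝔞 + h, 𝔞)` meets the circle at
signed distances `x = ξ(h)` and `2q + x`, the horizontal one at `h` and `2p - h`, so the power of
that point gives `x (2q + x) = h (2p - h) =: D`. Hence `x = D / (q + √(q² + D))`, which is
comparable to `D / (q + √D)` because `√D ≤ √(q² + D) ≤ q + √D`. As `t / (q + √t)` is increasing
in `t`, the comparability of `D` with `r h` carries over to `x`.
-/

theorem mul_two_mul_add_eq_of_sq_add_sq_eq {R : Type*} [CommRing R] {p q h x ρ : R}
    (h_base : p ^ 2 + q ^ 2 = ρ) (h_drop : (p - h) ^ 2 + (q + x) ^ 2 = ρ) :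
    x * (2 * q + x) = h * (2 * p - h) := by
  linear_combination h_drop - h_base

theorem eq_div_add_sqrt_of_mul_two_mul_add_eq {q x D : ℝ} (hqx : 0 ≤ q + x)
    (hne : 2 * q + x ≠ 0) (hD : x * (2 * q + x) = D) :
    x = D / (q + √(q ^ 2 + D)) := by
  have h_square : q ^ 2 + D = (q + x) ^ 2 := by rw [← hD]; ring
  have h_denom : q + √(q ^ 2 + D) = 2 * q + x := by
    rw [h_square, Real.sqrt_sq hqx]; ring
  rw [h_denom, eq_div_iff hne, hD]

theorem monotoneOn_div_add_sqrt {q : ℝ} (hq : 0 ≤ q) :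
    MonotoneOn (fun t : ℝ ↦ t / (q + √t)) (Set.Ici 0) := by
  intro s hs t _ hst
  obtain rfl | hs_pos := (Set.mem_Ici.mp hs).eq_or_lt
  · simp only [zero_div]
    positivity
  have ht_pos : 0 < t := hs_pos.trans_le hst
  have h_cross : s * √t ≤ t * √s :=
    calc s * √t = √s * √t * √s := by rw [mul_right_comm, Real.mul_self_sqrt hs_pos.le]
      _ ≤ √s * √t * √t := by gcongr
      _ = t * √s := by rw [mul_assoc, Real.mul_self_sqrt ht_pos.le, mul_comm]
  change s / (q + √s) ≤ t / (q + √t)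
  rw [div_le_div_iff₀ (by positivity) (by positivity), mul_add, mul_add]
  gcongr

theorem div_add_sqrt_sq_add_le_div_add_sqrt {q D : ℝ} (hq : 0 ≤ q) (hD : 0 < D) :
    D / (q + √(q ^ 2 + D)) ≤ D / (q + √D) := by
  gcongr
  exact le_add_of_nonneg_left (sq_nonneg q)

theorem half_div_add_sqrt_le_div_add_sqrt_sq_add {q D : ℝ} (hq : 0 ≤ q) (hD : 0 < D) :
    D / (q + √D) / 2 ≤ D / (q + √(q ^ 2 + D)) := by
  have h_sqrt : √(q ^ 2 + D) ≤ q + √D := by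
    refine Real.sqrt_le_iff.mpr ⟨by positivity, ?_⟩
    rw [add_sq, Real.sq_sqrt hD.le, add_right_comm]
    exact le_add_of_nonneg_right (by positivity)
  rw [div_div]
  gcongr
  linarith [Real.sqrt_nonneg D]

section Comparison

variable {q t D κ K : ℝ}

theorem mul_half_div_add_sqrt_le_div_add_sqrt_sq_add (hq : 0 ≤ q) (ht : 0 < t)
    (hκ : 0 < κ) (hκ_one : κ ≤ 1) (hD : κ * t ≤ D) :
    κ / 2 * t / (q + √t) ≤ D / (q + √(q ^ 2 + D)) := by
  have hκt : 0 < κ * t := mul_pos hκ ht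
  calc κ / 2 * t / (q + √t) = κ * t / (q + √t) / 2 := by ring
    _ ≤ κ * t / (q + √(κ * t)) / 2 := by
      gcongr
      exact mul_le_of_le_one_left ht.le hκ_one
    _ ≤ D / (q + √D) / 2 := by
      gcongr ?_ / 2
      exact monotoneOn_div_add_sqrt hq hκt.le (hκt.le.trans hD) hD
    _ ≤ D / (q + √(q ^ 2 + D)) :=
      half_div_add_sqrt_le_div_add_sqrt_sq_add hq (hκt.trans_le hD)

theorem div_add_sqrt_sq_add_le_mul_div_add_sqrt (hq : 0 ≤ q) (ht : 0 < t)
    (hK : 1 ≤ K) (hD_pos : 0 < D) (hD : D ≤ K * t) :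
    D / (q + √(q ^ 2 + D)) ≤ K * t / (q + √t) := by
  calc D / (q + √(q ^ 2 + D)) ≤ D / (q + √D) :=
      div_add_sqrt_sq_add_le_div_add_sqrt hq hD_pos
    _ ≤ K * t / (q + √(K * t)) :=
      monotoneOn_div_add_sqrt hq hD_pos.le (hD_pos.le.trans hD) hD
    _ ≤ K * t / (q + √t) := by
      gcongr
      exact le_mul_of_one_le_left ht.le hK

end Comparison

theorem circle_drop_estimate_general {a r m₁ m₂ h x κ : ℝ} (hr : 0 < r) (hm : a ≤ m₂)
    (h_base : (m₁ - a) ^ 2 + (m₂ - a) ^ 2 = r ^ 2) (hκ : 0 < κ) (hκ_one : κ ≤ 1)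
    (hh : 0 < h) (h_chord : κ * r ≤ 2 * (m₁ - a) - h) (hx : 0 < x)
    (h_drop : (m₁ - a - h) ^ 2 + (m₂ - a + x) ^ 2 = r ^ 2) :
    κ / 2 * (r * h) / (m₂ - a + √(r * h)) ≤ x ∧
      x ≤ 2 * (r * h) / (m₂ - a + √(r * h)) ∧
      x = (2 * (m₁ - a) * h - h ^ 2)
        / ((m₂ - a) + √((m₂ - a) ^ 2 + 2 * (m₁ - a) * h - h ^ 2)) := by
  have hq : 0 ≤ m₂ - a := sub_nonneg.mpr hm
  have h_power : x * (2 * (m₂ - a) + x) = 2 * (m₁ - a) * h - h ^ 2 := by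
    rw [mul_two_mul_add_eq_of_sq_add_sq_eq h_base h_drop]; ring
  have h_formula := eq_div_add_sqrt_of_mul_two_mul_add_eq (by positivity) (by positivity) h_power
  have h_radius : m₁ - a ≤ r :=
    le_of_sq_le_sq (h_base ▸ le_add_of_nonneg_right (sq_nonneg _)) hr.le
  have h_lower : κ * (r * h) ≤ 2 * (m₁ - a) * h - h ^ 2 := by
    linarith [mul_le_mul_of_nonneg_right h_chord hh.le]
  have h_upper : 2 * (m₁ - a) * h - h ^ 2 ≤ 2 * (r * h) := by
    linarith [mul_le_mul_of_nonneg_right h_radius hh.le, sq_nonneg h]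
  have h_pos : 0 < 2 * (m₁ - a) * h - h ^ 2 := h_power ▸ by positivity
  rw [add_sub_assoc, ← h_formula]
  refine ⟨?_, ?_, rfl⟩
  · exact (mul_half_div_add_sqrt_le_div_add_sqrt_sq_add hq (mul_pos hr hh) hκ hκ_one
      h_lower).trans_eq h_formula.symm
  · exact h_formula.trans_le
      (div_add_sqrt_sq_add_le_mul_div_add_sqrt hq (mul_pos hr hh) one_le_two h_pos h_upper)

/-- Estimate for the vertical drop `ξ(h)` of a circle of radius `r` through `(𝔞,𝔞)` with
center `m = (m₁,m₂)`: if `(𝔞+h, 𝔞-ξ(h))` is the lower intersection of the line `x₁ = 𝔞+h`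
with the circle, then `ξ(h) ≃ rh/(m₂-𝔞+√(rh))`, with absolute constants, and `ξ(h)` is given
by the explicit formula. -/
theorem circle_drop_estimate :
    ∃ c C : ℝ, 0 < c ∧ 0 < C ∧
      ∀ a r m₁ m₂ : ℝ, 2 < a → Real.sqrt 2 < r → a ≤ m₂ →
        (m₁ - a) ^ 2 + (m₂ - a) ^ 2 = r ^ 2 →
        r / Real.sqrt 2 < m₁ - a → m₁ - a ≤ r →
        ∀ h : ℝ, 0 < h → h ≤ r / Real.sqrt 2 →
          ∀ x : ℝ, 0 < x → (m₁ - a - h) ^ 2 + (m₂ - a + x) ^ 2 = r ^ 2 →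
            c * (r * h) / (m₂ - a + Real.sqrt (r * h)) ≤ x ∧
            x ≤ C * (r * h) / (m₂ - a + Real.sqrt (r * h)) ∧
            x = (2 * (m₁ - a) * h - h ^ 2)
              / ((m₂ - a) + Real.sqrt ((m₂ - a) ^ 2 + 2 * (m₁ - a) * h - h ^ 2)) := by
  refine ⟨1 / √2 / 2, 2, by positivity, two_pos, ?_⟩
  intro a r m₁ m₂ _ hr hm h_base hp _ h hh hhr x hx h_drop
  have h_chord : 1 / √2 * r ≤ 2 * (m₁ - a) - h := by
    rw [one_div_mul_eq_div]; linarith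
  exact circle_drop_estimate_general ((Real.sqrt_nonneg 2).trans_lt hr) hm h_base (by positivity)
    (div_le_one_of_le₀ (Real.one_le_sqrt.mpr one_le_two) (Real.sqrt_nonneg 2)) hh h_chord hx h_drop
end

section
/- Let C₊ = {x ∈ ℝ² : |x₂| < x₁} and let ν be the restriction to C₊ of the measure e^{−x₁} dx on ℝ². There is an absolute constant C > 0 such that the following holds. Let m ∈ C₊ with m₂ ≥ 0 and r > √2, let B̃ = B(m,r) ∩ C₊ be the truncated Euclidean ball, and suppose that the minimum of the first coordinate x₁ over the closure of B̃ is attained at the boundary point a = (𝔞, 𝔞) ∈ ∂C₊ with 𝔞 > 2. Then for every h > 0 the one-dimensional Lebesgue measure of the slice {x₂ ∈ ℝ : (𝔞 + h, x₂) ∈ B̃ + ((0,∞) × {0})} is at most C · (1 + h) · e^{𝔞} · ν(B̃). Here B̃ + ((0,∞) × {0}) is the shadow of B̃ in the positive x₁ direction. -/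
open MeasureTheory ENNReal

/-- The rotated cone `C₊ = {x ∈ ℝ² : |x₂| < x₁}`. -/
def conePlus : Set (Fin 2 → ℝ) := {x | |x 1| < x 0}

/-- The measure `ν`, the restriction to `C₊` of `e^{-x₁} dx` on `ℝ²`. -/
noncomputable def nuMeasure : Measure (Fin 2 → ℝ) :=
  (volume.withDensity (fun x => ENNReal.ofReal (Real.exp (-x 0)))).restrict conePlus

/-- The open Euclidean ball of center `m` and radius `r` in `ℝ²`. -/
def ball2 (m : Fin 2 → ℝ) (r : ℝ) : Set (Fin 2 → ℝ) :=
  {y | (y 0 - m 0) ^ 2 + (y 1 - m 1) ^ 2 < r ^ 2}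

/-!
Write `x₁ = x 0`, `x₂ = x 1`. Let `K` be the truncated ball, `p` a point of its closure minimizing
`x₁`, and `S` the section of `K` by the line `x₁ = p₁ + 1`. Scaling the center `m` towards the
apex of the cone by a Euclidean distance less than `√2 < r` stays in `K`, so minimality of `p₁`
forces `p₁ + 1 ≤ m₁`. Hence points of `K` may be moved to the right up to the line `x₁ = p₁ + 1`
without leaving `K`. As `K` is convex, it is also stable under contractions towards `p`. Combining
a contraction with a move to the right,
* contracting by `1 / (1 + h)` sends the slice of the shadow at `x₁ = p₁ + h` into `S`, so that the
  slice has measure at most `(1 + h) |S|`;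
* contracting `S` by `1 / 2` and sweeping it to the right fits a product set of area `|S| / 4` into
  `K ∩ {x₁ ≤ p₁ + 1}`, where the density of `ν` is at least `e^{-(p₁ + 1)}`.
-/

section Slices

/-- The section of `K` by the line `x₁ = c`. -/
def verticalSection (K : Set (Fin 2 → ℝ)) (c : ℝ) : Set ℝ := {y | ![c, y] ∈ K}

/-- The section of the shadow `K + ((0,∞) × {0})` by the line `x₁ = c`; the shadow itself is not
formed, its points being written `(b₁ + s, b₂)` with `b ∈ K` and `s > 0`. -/
def shadowSlice (K : Set (Fin 2 → ℝ)) (c : ℝ) : Set ℝ :=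
  {y | ∃ b ∈ K, ∃ s : ℝ, 0 < s ∧ c = b 0 + s ∧ y = b 1}

/-- A set is right-stable up to `q` if its points can be moved in the positive `x₁` direction, as
far as the line `x₁ = q`, without leaving it. -/
def RightStable (K : Set (Fin 2 → ℝ)) (q : ℝ) : Prop :=
  ∀ b ∈ K, ∀ c ∈ Set.Icc (b 0) q, ![c, b 1] ∈ K

variable {K : Set (Fin 2 → ℝ)} {p b : Fin 2 → ℝ} {c q t : ℝ}

lemma RightStable.mk_homothety_mem (hright : RightStable K q)
    (hstar : ∀ b ∈ K, openSegment ℝ p b ⊆ K) (hb : b ∈ K) (ht : t ∈ Set.Ioo 0 1)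
    (hc : c ∈ Set.Icc (AffineMap.homothety (p 0) t (b 0)) q) :
    ![c, AffineMap.homothety (p 1) t (b 1)] ∈ K :=
  hright _ (hstar b hb (lineMap_mem_openSegment ℝ p b ht)) c hc

lemma RightStable.volume_shadowSlice_le (hright : RightStable K q)
    (hstar : ∀ b ∈ K, openSegment ℝ p b ⊆ K) (ht : t ∈ Set.Ioo 0 1)
    (hcq : AffineMap.homothety (p 0) t c ≤ q) :
    ENNReal.ofReal t * volume (shadowSlice K c) ≤ volume (verticalSection K q) := by
  have himage : AffineMap.homothety (p 1) t '' shadowSlice K c ⊆ verticalSection K q := by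
    rintro _ ⟨_, ⟨b, hb, s, hs, rfl, rfl⟩, rfl⟩
    refine hright.mk_homothety_mem hstar hb ht ⟨?_, le_rfl⟩
    simp only [AffineMap.homothety_apply, vsub_eq_sub, smul_eq_mul, vadd_eq_add] at hcq ⊢
    nlinarith [mul_pos ht.1 hs]
  simpa [Measure.addHaar_image_homothety, abs_of_pos ht.1] using measure_mono (μ := volume) himage

lemma volume_mul_volume_le_of_forall_mem {A B : Set ℝ} (hAB : ∀ x ∈ A, ∀ y ∈ B, ![x, y] ∈ K) :
    volume A * volume B ≤ volume K := by
  have hpi : Set.univ.pi ![A, B] ⊆ K := by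
    intro x hx
    have hcoords : ![x 0, x 1] = x := by ext i; fin_cases i <;> rfl
    exact hcoords ▸ hAB (x 0) (hx 0 trivial) (x 1) (hx 1 trivial)
  simpa [volume_pi_pi] using measure_mono (μ := volume) hpi

lemma RightStable.mul_volume_verticalSection_le (hright : RightStable K q)
    (hstar : ∀ b ∈ K, openSegment ℝ p b ⊆ K) :
    ENNReal.ofReal ((q - p 0) / 4) * volume (verticalSection K q) ≤
      volume (K ∩ {x | x 0 ≤ q}) := by
  set half : ℝ →ᵃ[ℝ] ℝ := AffineMap.homothety (p 1) (1 / 2 : ℝ)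
  set mid : ℝ := AffineMap.homothety (p 0) (1 / 2 : ℝ) q with hmid
  have hprod : ∀ x ∈ Set.Ioo mid q, ∀ y ∈ half '' verticalSection K q,
      ![x, y] ∈ K ∩ {x | x 0 ≤ q} := by
    rintro x hx _ ⟨y, hy, rfl⟩
    exact ⟨hright.mk_homothety_mem hstar hy (by norm_num) (Set.Ioo_subset_Icc_self hx), hx.2.le⟩
  have hlength : q - mid = (q - p 0) / 2 := by
    simp only [hmid, AffineMap.homothety_apply, vsub_eq_sub, smul_eq_mul, vadd_eq_add]
    ring
  calc ENNReal.ofReal ((q - p 0) / 4) * volume (verticalSection K q)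
      = ENNReal.ofReal ((q - p 0) / 2) *
          (ENNReal.ofReal (1 / 2) * volume (verticalSection K q)) := by
        rw [← mul_assoc, ← ENNReal.ofReal_mul' (by norm_num)]
        congr 2
        ring
    _ = volume (Set.Ioo mid q) * volume (half '' verticalSection K q) := by
        simp [half, Measure.addHaar_image_homothety, hlength]
    _ ≤ volume (K ∩ {x | x 0 ≤ q}) := volume_mul_volume_le_of_forall_mem hprod

end Slices

lemma exp_neg_mul_volume_le_nuMeasure {E : Set (Fin 2 → ℝ)} {q : ℝ} (hE : E ⊆ conePlus)
    (hq : ∀ x ∈ E, x 0 ≤ q) : ENNReal.ofReal (Real.exp (-q)) * volume E ≤ nuMeasure E := by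
  rw [nuMeasure, Measure.restrict_eq_self _ hE, ← setLIntegral_const]
  refine (setLIntegral_mono (by fun_prop) fun x hx => ?_).trans (withDensity_apply_le _ _)
  gcongr
  exact hq x hx

lemma RightStable.mul_volume_shadowSlice_le_nuMeasure {K : Set (Fin 2 → ℝ)} {p : Fin 2 → ℝ}
    {c q t : ℝ} (hright : RightStable K q) (hstar : ∀ b ∈ K, openSegment ℝ p b ⊆ K)
    (hK : K ⊆ conePlus) (ht : t ∈ Set.Ioo 0 1) (hcq : AffineMap.homothety (p 0) t c ≤ q) :
    ENNReal.ofReal (Real.exp (-q) * ((q - p 0) / 4) * t) * volume (shadowSlice K c) ≤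
      nuMeasure K :=
  calc ENNReal.ofReal (Real.exp (-q) * ((q - p 0) / 4) * t) * volume (shadowSlice K c)
      = ENNReal.ofReal (Real.exp (-q)) * (ENNReal.ofReal ((q - p 0) / 4) *
          (ENNReal.ofReal t * volume (shadowSlice K c))) := by
        rw [ENNReal.ofReal_mul' ht.1.le, ENNReal.ofReal_mul (Real.exp_nonneg _)]
        ring
    _ ≤ ENNReal.ofReal (Real.exp (-q)) *
          (ENNReal.ofReal ((q - p 0) / 4) * volume (verticalSection K q)) := by
        gcongr
        exact hright.volume_shadowSlice_le hstar ht hcq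
    _ ≤ ENNReal.ofReal (Real.exp (-q)) * volume (K ∩ {x | x 0 ≤ q}) := by
        gcongr
        exact hright.mul_volume_verticalSection_le hstar
    _ ≤ nuMeasure (K ∩ {x | x 0 ≤ q}) :=
        exp_neg_mul_volume_le_nuMeasure (Set.inter_subset_left.trans hK) fun _ hx => hx.2
    _ ≤ nuMeasure K := measure_mono Set.inter_subset_left

lemma isOpen_conePlus : IsOpen conePlus :=
  isOpen_lt (by fun_prop) (by fun_prop)

lemma isOpen_ball2 (m : Fin 2 → ℝ) (r : ℝ) : IsOpen (ball2 m r) :=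
  isOpen_lt (by fun_prop) (by fun_prop)

lemma convex_conePlus : Convex ℝ conePlus := by
  let swap : (Fin 2 → ℝ) →ₗ[ℝ] ℝ × ℝ := (LinearMap.proj 1).prod (LinearMap.proj 0)
  simpa [conePlus, Set.preimage, swap] using
    (convexOn_univ_norm (E := ℝ)).convex_strict_epigraph.linear_preimage swap

lemma convex_ball2 (m : Fin 2 → ℝ) (r : ℝ) : Convex ℝ (ball2 m r) := by
  have hsq (i : Fin 2) : ConvexOn ℝ Set.univ fun y : Fin 2 → ℝ => (y i - m i) ^ 2 :=
    even_two.convexOn_pow.comp_affineMap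
      ((LinearMap.proj i).toAffineMap - AffineMap.const ℝ (Fin 2 → ℝ) (m i))
  simpa [ball2] using ((hsq 0).add (hsq 1)).convex_lt (r ^ 2)

lemma rightStable_ball2_inter_conePlus {m : Fin 2 → ℝ} {r q : ℝ} (hq : q ≤ m 0) :
    RightStable (ball2 m r ∩ conePlus) q := by
  rintro b ⟨hball, hcone⟩ c ⟨hbc, hcq⟩
  have hsq : (c - m 0) ^ 2 ≤ (b 0 - m 0) ^ 2 := by
    rw [sq_le_sq, abs_of_nonpos (by linarith), abs_of_nonpos (by linarith)]
    linarith
  exact ⟨(add_le_add_left hsq _).trans_lt hball, lt_of_lt_of_le hcone hbc⟩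

lemma smul_mem_conePlus {x : Fin 2 → ℝ} {s : ℝ} (hs : 0 < s) (hx : x ∈ conePlus) :
    s • x ∈ conePlus := by
  simpa [conePlus, abs_mul, abs_of_pos hs, hs] using hx

lemma smul_mem_ball2 {m : Fin 2 → ℝ} {r s : ℝ} (hm : m ∈ conePlus) (hr : √2 < r)
    (hs : (1 - s) * m 0 ∈ Set.Icc 0 1) : s • m ∈ ball2 m r := by
  have hm1 : m 1 ^ 2 ≤ m 0 ^ 2 := sq_le_sq' (abs_lt.1 hm).1.le (abs_lt.1 hm).2.le
  calc ((s • m) 0 - m 0) ^ 2 + ((s • m) 1 - m 1) ^ 2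
      = (1 - s) ^ 2 * m 0 ^ 2 + (1 - s) ^ 2 * m 1 ^ 2 := by
        simp only [Pi.smul_apply, smul_eq_mul]
        ring
    _ ≤ (1 - s) ^ 2 * m 0 ^ 2 + (1 - s) ^ 2 * m 0 ^ 2 := by gcongr
    _ = 2 * ((1 - s) * m 0) ^ 2 := by ring
    _ ≤ 2 := by nlinarith [pow_le_one₀ (n := 2) hs.1 hs.2]
    _ < r ^ 2 := Real.lt_sq_of_sqrt_lt hr

lemma add_one_le_of_forall_mem_ball2_inter_conePlus {m : Fin 2 → ℝ} {r a : ℝ}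
    (hm : m ∈ conePlus) (hr : √2 < r) (ha : 0 < a)
    (hmin : ∀ x ∈ ball2 m r ∩ conePlus, a ≤ x 0) : a + 1 ≤ m 0 := by
  by_contra! hlt
  have hm0 : 0 < m 0 := (abs_nonneg _).trans_lt hm
  obtain ⟨c, hc, hc'⟩ : ∃ c, max 0 (m 0 - 1) < c ∧ c < min a (m 0) :=
    exists_between (by simp [ha, hm0, hlt, sub_lt_iff_lt_add])
  obtain ⟨⟨hc0, hmc⟩, ⟨hca, hcm⟩⟩ := And.intro (max_lt_iff.1 hc) (lt_min_iff.1 hc')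
  have hscale : c / m 0 * m 0 = c := div_mul_cancel₀ c hm0.ne'
  have hball : (c / m 0) • m ∈ ball2 m r :=
    smul_mem_ball2 hm hr ⟨by linarith, by linarith⟩
  have hac : a ≤ c / m 0 * m 0 := hmin _ ⟨hball, smul_mem_conePlus (by positivity) hm⟩
  linarith

theorem shadow_slice_bound_general {m p : Fin 2 → ℝ} {r h : ℝ} (hm : m ∈ conePlus) (hr : √2 < r)
    (hp : p ∈ closure (ball2 m r ∩ conePlus)) (hp0 : 0 < p 0)
    (hmin : ∀ x ∈ ball2 m r ∩ conePlus, p 0 ≤ x 0) (hh : 0 < h) :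
    volume (shadowSlice (ball2 m r ∩ conePlus) (p 0 + h)) ≤
      ENNReal.ofReal (4 * Real.exp 1 * (1 + h) * Real.exp (p 0)) *
        nuMeasure (ball2 m r ∩ conePlus) := by
  set K := ball2 m r ∩ conePlus
  have hopen : IsOpen K := (isOpen_ball2 m r).inter isOpen_conePlus
  have hconvex : Convex ℝ K := (convex_ball2 m r).inter convex_conePlus
  have hstar : ∀ b ∈ K, openSegment ℝ p b ⊆ K := fun b hb =>
    (hconvex.openSegment_closure_interior_subset_interior hp (hopen.interior_eq.symm ▸ hb)).trans
      interior_subset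
  have hright : RightStable K (p 0 + 1) := rightStable_ball2_inter_conePlus
    (add_one_le_of_forall_mem_ball2_inter_conePlus hm hr hp0 hmin)
  have hcontract : AffineMap.homothety (p 0) (1 + h)⁻¹ (p 0 + h) ≤ p 0 + 1 := by
    have hratio : (1 + h)⁻¹ * h ≤ 1 := inv_mul_le_one_of_le₀ (by linarith) (by linarith)
    simpa [AffineMap.homothety_apply, add_comm] using hratio
  have hnu := hright.mul_volume_shadowSlice_le_nuMeasure hstar Set.inter_subset_right
    ⟨by positivity, inv_lt_one_of_one_lt₀ (by linarith)⟩ hcontract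
  have hconst : 4 * Real.exp 1 * (1 + h) * Real.exp (p 0) *
      (Real.exp (-(p 0 + 1)) * ((p 0 + 1 - p 0) / 4) * (1 + h)⁻¹) = 1 := by
    rw [Real.exp_neg, Real.exp_add]
    field_simp
    ring
  refine le_of_eq_of_le ?_ (mul_le_mul_right hnu _)
  rw [← mul_assoc, ← ENNReal.ofReal_mul (by positivity), hconst, ENNReal.ofReal_one, one_mul]

/-- Slices of the shadow of a truncated ball `B̃ = B(m,r) ∩ C₊` in the positive `x₁`
direction: if the minimum of `x₁` over the closure of `B̃` is attained at the boundary point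
`(𝔞,𝔞) ∈ ∂C₊` with `𝔞 > 2`, `r > √2`, `m₂ ≥ 0`, then for every `h > 0` the one-dimensional
measure of `{x₂ : (𝔞+h, x₂) ∈ shadow(B̃)}` is at most `C (1+h) e^𝔞 ν(B̃)`. -/
theorem shadow_slice_bound :
    ∃ C : ℝ, 0 < C ∧
      ∀ (m : Fin 2 → ℝ) (r a : ℝ), m ∈ conePlus → 0 ≤ m 1 → Real.sqrt 2 < r → 2 < a →
        (fun _ : Fin 2 => a) ∈ closure (ball2 m r ∩ conePlus) →
        (∀ x ∈ closure (ball2 m r ∩ conePlus), a ≤ x 0) →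
        ∀ h : ℝ, 0 < h →
          volume {y : ℝ | ∃ b ∈ ball2 m r ∩ conePlus, ∃ s : ℝ,
              0 < s ∧ a + h = b 0 + s ∧ y = b 1}
            ≤ ENNReal.ofReal (C * (1 + h) * Real.exp a)
              * nuMeasure (ball2 m r ∩ conePlus) := by
  refine ⟨4 * Real.exp 1, by positivity, fun m r a hm _ hr ha hcl hmin h hh => ?_⟩
  exact shadow_slice_bound_general hm hr hcl (two_pos.trans ha)
    (fun x hx => hmin x (subset_closure hx)) hh
end
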